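/- Let κ > 0 and let U ⊆ ℝ² be an open connected set whose complement K = ℝ² \ U is compact. Let D ⊂ ℝ² be a bounded open domain whose boundary Γ = ∂D is connected and real-analytic, with closure(D) = D ∪ Γ ⊆ U, and assume κ is not a Dirichlet eigenvalue for D. Let Λ be a nonempty relatively open subset of Γ. If ψ₁ and ψ₂ are radiation solutions on U such that Im ψ₁(x) = Im ψ₂(x) for all x ∈ Λ, then ψ₁(x) = ψ₂(x) for all x ∈ U. -/

import Mathlib

noncomputable section

open Real MeasureTheory Set

/-- The plane `ℝ²`. -/
abbrev R2 : Type := EuclideanSpace ℝ (Fin 2)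

/-- The Laplacian of a complex-valued function on `ℝ²`, as the sum of the second
derivatives along the standard coordinate directions. -/
def laplacian2 (f : R2 → ℂ) (x : R2) : ℂ :=
  ∑ i : Fin 2,
    fderiv ℝ (fun y => fderiv ℝ f y (EuclideanSpace.single i 1)) x (EuclideanSpace.single i 1)

/-- `ψ` is a radiation solution of the Helmholtz equation `Δψ + κ²ψ = 0` on `U`:
it is `C²` on `U`, satisfies the Helmholtz equation on `U`, and satisfies the
Sommerfeld radiation condition
`√|x| (∂ψ/∂|x| − iκψ)(x) → 0` as `|x| → ∞`, uniformly in `x/|x|`. -/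
def IsRadiationSolution (κ : ℝ) (U : Set R2) (ψ : R2 → ℂ) : Prop :=
  ContDiffOn ℝ 2 ψ U ∧
  (∀ x ∈ U, laplacian2 ψ x + (κ : ℂ) ^ 2 * ψ x = 0) ∧
  ∀ ε > 0, ∃ R > 0, ∀ x ∈ U, R ≤ ‖x‖ →
    ‖((Real.sqrt ‖x‖ : ℂ) *
      (fderiv ℝ ψ x (‖x‖⁻¹ • x) - Complex.I * (κ : ℂ) * ψ x))‖ < ε

/-- `Γ` is a real-analytic closed curve in `ℝ²`: the image of a real-analytic
`2π`-periodic map `γ : ℝ → ℝ²` with non-vanishing derivative, injective on `[0, 2π)`. -/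
def IsRealAnalyticClosedCurve (Γ : Set R2) : Prop :=
  ∃ γ : ℝ → R2, (∀ t : ℝ, AnalyticAt ℝ γ t) ∧ Function.Periodic γ (2 * π) ∧
    (∀ t : ℝ, deriv γ t ≠ 0) ∧ Set.InjOn γ (Set.Ico 0 (2 * π)) ∧ Γ = Set.range γ

/-- `κ` is not a Dirichlet eigenvalue for the bounded open set `D`: every function
continuous on `closure D`, `C²` on `D`, satisfying `Δu + κ²u = 0` on `D` and
vanishing on `∂D`, vanishes identically on `D`. -/
def NotDirichletEigenvalue (κ : ℝ) (D : Set R2) : Prop :=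
  ∀ u : R2 → ℂ, ContinuousOn u (closure D) → ContDiffOn ℝ 2 u D →
    (∀ x ∈ D, laplacian2 u x + (κ : ℂ) ^ 2 * u x = 0) →
    (∀ x ∈ frontier D, u x = 0) → ∀ x ∈ D, u x = 0

/-!
The difference `ψ` of the two solutions is real-analytic: in polar coordinates around a point its
angular Fourier coefficients solve Bessel's equation and stay bounded at the centre, hence are
multiples of the Bessel function `r ^ n + ⋯`, and the resulting Fourier–Bessel expansion is a
convergent power series in `z` and `z̄`. So `Im ψ`, which vanishes on `Λ`, vanishes on the whole
analytic curve `∂D`; as `κ` is not an eigenvalue it vanishes on `D`, and then on `U` by unique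
continuation. For a real-valued `ψ` the imaginary and real parts of the radiation condition give
both `ψ = o(r ^ (-1/2))` and `∂ψ/∂r = o(r ^ (-1/2))`. The angular Fourier coefficients inherit this
decay, but a nonzero solution of Bessel's equation cannot decay faster than `r ^ (-1/2)`. Hence `ψ`
vanishes near infinity, and so on `U`.
-/

open Filter Topology InnerProductSpace Laplacian

section DoublePowerSeries

variable {𝕜 : Type*} [NontriviallyNormedField 𝕜]

/-- The monomial `y.1 ^ n * y.2 ^ (m - n)` on `𝕜 × 𝕜` as an `m`-linear map (for `n ≤ m`). -/
def pairMonomial (𝕜 : Type*) [NontriviallyNormedField 𝕜] (m n : ℕ) :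
    ContinuousMultilinearMap 𝕜 (fun _ : Fin m => 𝕜 × 𝕜) 𝕜 :=
  (ContinuousMultilinearMap.mkPiAlgebra 𝕜 (Fin m) 𝕜).compContinuousLinearMap
    (fun i => if (i : ℕ) < n then ContinuousLinearMap.fst 𝕜 𝕜 𝕜 else ContinuousLinearMap.snd 𝕜 𝕜 𝕜)

lemma norm_pairMonomial_le (m n : ℕ) : ‖pairMonomial 𝕜 m n‖ ≤ 1 := by
  refine (ContinuousMultilinearMap.norm_compContinuousLinearMap_le _ _).trans ?_
  rw [ContinuousMultilinearMap.norm_mkPiAlgebra, one_mul]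
  refine Finset.prod_le_one (fun _ _ => norm_nonneg _) (fun i _ => ?_)
  split_ifs
  · exact ContinuousLinearMap.norm_fst_le ..
  · exact ContinuousLinearMap.norm_snd_le ..

lemma pairMonomial_apply_const (n k : ℕ) (y : 𝕜 × 𝕜) :
    pairMonomial 𝕜 (n + k) n (fun _ => y) = y.1 ^ n * y.2 ^ k := by
  simp only [pairMonomial, ContinuousMultilinearMap.compContinuousLinearMap_apply,
    ContinuousMultilinearMap.mkPiAlgebra_apply]
  rw [Fin.prod_univ_add]
  simp

/-- The formal multilinear series of the double power series `∑ c n k * y.1 ^ n * y.2 ^ k`, with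
terms grouped by total degree. -/
def doublePowerSeries (c : ℕ → ℕ → 𝕜) : FormalMultilinearSeries 𝕜 (𝕜 × 𝕜) 𝕜 := fun m =>
  ∑ ij ∈ Finset.HasAntidiagonal.antidiagonal m, c ij.1 ij.2 • pairMonomial 𝕜 m ij.1

lemma doublePowerSeries_apply_const (c : ℕ → ℕ → 𝕜) (m : ℕ) (y : 𝕜 × 𝕜) :
    doublePowerSeries c m (fun _ => y) =
      ∑ ij ∈ Finset.HasAntidiagonal.antidiagonal m, c ij.1 ij.2 * y.1 ^ ij.1 * y.2 ^ ij.2 := by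
  simp only [doublePowerSeries, sum_apply, smul_apply]
  refine Finset.sum_congr rfl (fun ij hij => ?_)
  rw [← Finset.HasAntidiagonal.mem_antidiagonal.1 hij, pairMonomial_apply_const, smul_eq_mul,
    mul_assoc]

variable {c : ℕ → ℕ → 𝕜} {C A : ℝ}

lemma norm_doublePowerSeries_le (hA : 0 ≤ A) (hc : ∀ n k, ‖c n k‖ ≤ C * A ^ (n + k)) (m : ℕ) :
    ‖doublePowerSeries c m‖ ≤ C * (2 * A) ^ m := by
  have hC : 0 ≤ C := by simpa using (norm_nonneg _).trans (hc 0 0)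
  have hterm : ∀ ij ∈ Finset.HasAntidiagonal.antidiagonal m,
      ‖c ij.1 ij.2 • pairMonomial 𝕜 m ij.1‖ ≤ C * A ^ m := fun ij hij => by
    rw [norm_smul, ← Finset.HasAntidiagonal.mem_antidiagonal.1 hij]
    exact (mul_le_of_le_one_right (norm_nonneg _) (norm_pairMonomial_le _ _)).trans (hc _ _)
  calc ‖doublePowerSeries c m‖ ≤ (m + 1 : ℕ) * (C * A ^ m) := by
        refine (norm_sum_le_of_le _ hterm).trans_eq ?_
        rw [Finset.sum_const, Finset.Nat.card_antidiagonal, nsmul_eq_mul]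
    _ ≤ 2 ^ m * (C * A ^ m) := by gcongr; exact_mod_cast Nat.lt_two_pow_self
    _ = C * (2 * A) ^ m := by rw [mul_pow]; ring

lemma summable_mul_pow_mul_pow [CompleteSpace 𝕜] (hA : 0 ≤ A)
    (hc : ∀ n k, ‖c n k‖ ≤ C * A ^ (n + k)) {y : 𝕜 × 𝕜} (hy : A * ‖y‖ < 1) :
    Summable fun q : ℕ × ℕ => c q.1 q.2 * y.1 ^ q.1 * y.2 ^ q.2 := by
  have hgeo := summable_geometric_of_lt_one (by positivity) hy
  refine Summable.of_norm_bounded ((hgeo.mul_of_nonneg hgeo (fun _ => by positivity)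
    (fun _ => by positivity)).mul_left C) (fun ⟨n, k⟩ => ?_)
  calc ‖c n k * y.1 ^ n * y.2 ^ k‖ = ‖c n k‖ * ‖y.1‖ ^ n * ‖y.2‖ ^ k := by
        simp only [norm_mul, norm_pow]
    _ ≤ C * A ^ (n + k) * ‖y‖ ^ n * ‖y‖ ^ k := by
        have hc' := hc n k
        have hCA := (norm_nonneg _).trans hc'
        gcongr
        · exact norm_fst_le y
        · exact norm_snd_le y
    _ = C * ((A * ‖y‖) ^ n * (A * ‖y‖) ^ k) := by ring

lemma hasSum_doublePowerSeries {y : 𝕜 × 𝕜} [CompleteSpace 𝕜]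
    (h : Summable fun q : ℕ × ℕ => c q.1 q.2 * y.1 ^ q.1 * y.2 ^ q.2) :
    HasSum (fun m => doublePowerSeries c m fun _ => y)
      (∑' n, ∑' k, c n k * y.1 ^ n * y.2 ^ k) := by
  have hsum := h.hasSum
  rw [h.tsum_prod, ← Finset.HasAntidiagonal.sigmaAntidiagonalEquivProd.hasSum_iff] at hsum
  refine hsum.sigma fun m => ?_
  rw [doublePowerSeries_apply_const]
  exact Finset.hasSum _ _

theorem analyticAt_tsum_tsum_mul_pow_mul_pow [CompleteSpace 𝕜] (hA : 0 < A)
    (hc : ∀ n k, ‖c n k‖ ≤ C * A ^ (n + k)) :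
    AnalyticAt 𝕜 (fun y : 𝕜 × 𝕜 => ∑' n, ∑' k, c n k * y.1 ^ n * y.2 ^ k) 0 := by
  refine ⟨doublePowerSeries c, ENNReal.ofReal (2 * A)⁻¹, ?_, by simpa using hA, fun {y} hy => ?_⟩
  · refine FormalMultilinearSeries.le_radius_of_bound _ C (r := Real.toNNReal (2 * A)⁻¹) fun m => ?_
    rw [Real.coe_toNNReal _ (by positivity), inv_pow, ← div_eq_mul_inv]
    exact div_le_of_le_mul₀ (by positivity) (by simpa using (norm_nonneg _).trans (hc 0 0))
      (norm_doublePowerSeries_le hA.le hc m)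
  · rw [Metric.mem_eball, edist_zero_right, ← ofReal_norm,
      ENNReal.ofReal_lt_ofReal_iff (by positivity), ← one_div, lt_div_iff₀ (by positivity)] at hy
    rw [zero_add]
    exact hasSum_doublePowerSeries
      (summable_mul_pow_mul_pow hA.le hc (by nlinarith [norm_nonneg y]))

end DoublePowerSeries

section FourierCoeff

theorem hasDerivAt_integral_of_continuousOn_prod {X E : Type*} [TopologicalSpace X]
    [CompactSpace X] [MeasurableSpace X] [OpensMeasurableSpace X] {μ : Measure X}
    [IsFiniteMeasure μ] [NormedAddCommGroup E] [NormedSpace ℝ E] [SecondCountableTopologyEither X E]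
    {Φ Φ' : ℝ → X → E} {s : Set ℝ} (hs : IsOpen s) (hΦ : ∀ r ∈ s, Continuous (Φ r))
    (hΦ' : ContinuousOn (fun q : ℝ × X => Φ' q.1 q.2) (s ×ˢ univ))
    (hderiv : ∀ r ∈ s, ∀ x, HasDerivAt (fun ρ => Φ ρ x) (Φ' r x) r) {r : ℝ} (hr : r ∈ s) :
    HasDerivAt (fun ρ => ∫ x, Φ ρ x ∂μ) (∫ x, Φ' r x ∂μ) r := by
  obtain ⟨δ, hδ, hsub⟩ := Metric.nhds_basis_closedBall.mem_iff.1 (hs.mem_nhds hr)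
  obtain ⟨M, hM⟩ := ((isCompact_closedBall r δ).prod isCompact_univ).exists_bound_of_continuousOn
    (hΦ'.mono (prod_mono hsub (subset_univ _)))
  have hΦ'r : Continuous (Φ' r) :=
    hΦ'.comp_continuous (f := fun x => (r, x)) (by fun_prop) fun _ => ⟨hr, trivial⟩
  exact (hasDerivAt_integral_of_dominated_loc_of_deriv_le (bound := fun _ => M)
    (Metric.closedBall_mem_nhds r hδ)
    (by filter_upwards [hs.mem_nhds hr] with ρ hρ using (hΦ ρ hρ).aestronglyMeasurable)
    ((hΦ r hr).integrable_of_hasCompactSupport (HasCompactSupport.of_compactSpace _))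
    hΦ'r.aestronglyMeasurable
    (.of_forall fun x ρ hρ => hM (ρ, x) ⟨hρ, trivial⟩) (integrable_const M)
    (.of_forall fun x ρ hρ => hderiv ρ (hsub hρ) x)).2

variable {T : ℝ} [hT : Fact (0 < T)] {E : Type*} [NormedAddCommGroup E] [NormedSpace ℂ E]

theorem hasDerivAt_fourierCoeff {Φ Φ' : ℝ → AddCircle T → E} {s : Set ℝ} (hs : IsOpen s)
    (hΦ : ∀ r ∈ s, Continuous (Φ r))
    (hΦ' : ContinuousOn (fun q : ℝ × AddCircle T => Φ' q.1 q.2) (s ×ˢ univ))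
    (hderiv : ∀ r ∈ s, ∀ t, HasDerivAt (fun ρ => Φ ρ t) (Φ' r t) r) (n : ℤ) {r : ℝ} (hr : r ∈ s) :
    HasDerivAt (fun ρ => fourierCoeff (Φ ρ) n) (fourierCoeff (Φ' r) n) r :=
  hasDerivAt_integral_of_continuousOn_prod (Φ := fun ρ t => fourier (-n) t • Φ ρ t)
    (Φ' := fun ρ t => fourier (-n) t • Φ' ρ t) hs
    (fun r hr => (map_continuous (fourier (-n))).smul (hΦ r hr))
    (((map_continuous (fourier (-n))).comp continuous_snd).continuousOn.smul hΦ')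
    (fun r hr t => (hderiv r hr t).const_smul (fourier (-n) t)) hr

lemma norm_fourierCoeff_le {w : AddCircle T → E} {M : ℝ} (hw : ∀ t, ‖w t‖ ≤ M) (n : ℤ) :
    ‖fourierCoeff w n‖ ≤ M := by
  refine (norm_integral_le_of_norm_le_const (C := M) (.of_forall fun t => ?_)).trans_eq (by simp)
  rw [norm_smul, fourier_apply, Circle.norm_coe, one_mul]
  exact hw t

lemma tendsto_fourierCoeff_of_tendstoUniformly {ι : Type*} {l : Filter ι} {w : ι → AddCircle T → E}
    (hw : TendstoUniformly w 0 l) (n : ℤ) :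
    Tendsto (fun i => fourierCoeff (w i) n) l (𝓝 0) := by
  refine Metric.nhds_basis_closedBall.tendsto_right_iff.2 fun ε hε => ?_
  filter_upwards [Metric.tendstoUniformly_iff.1 hw ε hε] with i hi
  rw [mem_closedBall_zero_iff]
  exact norm_fourierCoeff_le (fun t => by simpa using (hi t).le) n

theorem fourierCoeff_of_hasDerivAt {w w' : AddCircle T → ℂ}
    (hw : ∀ x : ℝ, HasDerivAt (fun y : ℝ => w y) (w' x) x) (hw' : Continuous w') (n : ℤ) :
    fourierCoeff w' n = 2 * π * Complex.I * n / T * fourierCoeff w n := by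
  have hcoe : Continuous fun x : ℝ => (x : AddCircle T) := AddCircle.continuous_mk' T
  have hperiod : ((T : ℝ) : AddCircle T) = (0 : ℝ) := by simp
  have hparts := intervalIntegral.integral_mul_deriv_eq_deriv_mul (a := 0) (b := T)
    (fun x _ => hasDerivAt_fourier_neg T n x) (fun x _ => hw x)
    (Continuous.intervalIntegrable (by fun_prop) _ _)
    ((hw'.comp hcoe).intervalIntegrable _ _)
  rw [hperiod, sub_self, zero_sub, ← intervalIntegral.integral_neg] at hparts
  simp only [fourierCoeff_eq_intervalIntegral _ n 0, zero_add, smul_eq_mul, hparts,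
    Complex.real_smul]
  rw [mul_left_comm, ← intervalIntegral.integral_const_mul (2 * π * Complex.I * n / T)]
  congr 2
  ext x
  ring

end FourierCoeff

section BesselEquation

lemma nonpos_of_tendsto_zero_of_hasDerivAt {E E' : ℝ → ℝ} {C a : ℝ} (ha : 0 ≤ a)
    (hE : ∀ r ∈ Ioi a, HasDerivAt E (E' r) r) (hE' : ∀ r ∈ Ioi a, 0 ≤ E' r + C / r ^ 2 * E r)
    (hlim : Tendsto E atTop (𝓝 0)) {r : ℝ} (hr : r ∈ Ioi a) : E r ≤ 0 := by
  let W : ℝ → ℝ := fun r => E r * exp (-C / r)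
  have hW : ∀ r ∈ Ioi a, HasDerivAt W ((E' r + C / r ^ 2 * E r) * exp (-C / r)) r := fun r hr => by
    have hr0 : r ≠ 0 := (ha.trans_lt hr).ne'
    refine ((hE r hr).mul ((hasDerivAt_inv hr0).const_mul (-C)).exp).congr_deriv ?_
    field_simp
  have hWmono : MonotoneOn W (Ioi a) := by
    refine monotoneOn_of_deriv_nonneg (convex_Ioi a)
      (fun r hr => (hW r hr).continuousAt.continuousWithinAt) (fun r hr => ?_) (fun r hr => ?_)
    · exact (hW r (interior_subset hr)).differentiableAt.differentiableWithinAt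
    · rw [(hW r (interior_subset hr)).deriv]
      exact mul_nonneg (hE' r (interior_subset hr)) (exp_pos _).le
  have hWlim : Tendsto W atTop (𝓝 0) := by
    have hC : Tendsto (fun r : ℝ => -C / r) atTop (𝓝 0) := tendsto_const_nhds.div_atTop tendsto_id
    simpa [W] using hlim.mul ((continuous_exp.tendsto 0).comp hC)
  have hWr : W r ≤ 0 := ge_of_tendsto hWlim <| by
    filter_upwards [eventually_ge_atTop r] with x hx using hWmono hr (hr.trans_le hx) hx
  exact nonpos_of_mul_nonpos_left hWr (exp_pos _)

variable {F : Type*} [NormedAddCommGroup F]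

theorem eq_zero_of_tendsto_zero_of_oscillator [InnerProductSpace ℝ F] {κ M a : ℝ} (hκ : κ ≠ 0)
    (ha : 0 ≤ a) {p q : ℝ → F} (hp : ∀ r ∈ Ioi a, HasDerivAt p (q r) r)
    (hq : ∀ r ∈ Ioi a, HasDerivAt q ((M / r ^ 2 - κ ^ 2) • p r) r)
    (hp0 : Tendsto p atTop (𝓝 0)) (hq0 : Tendsto q atTop (𝓝 0)) {r : ℝ} (hr : r ∈ Ioi a) :
    p r = 0 := by
  -- The relative growth rate of this energy is integrable at infinity.
  let E : ℝ → ℝ := fun r => ‖q r‖ ^ 2 + κ ^ 2 * ‖p r‖ ^ 2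
  have hE : ∀ r ∈ Ioi a, HasDerivAt E (2 * M / r ^ 2 * ⟪p r, q r⟫_ℝ) r := fun r hr => by
    refine ((hq r hr).norm_sq.add ((hp r hr).norm_sq.const_mul (κ ^ 2))).congr_deriv ?_
    rw [inner_smul_right, real_inner_comm]
    ring
  have hinner : ∀ r, |2 * κ * ⟪p r, q r⟫_ℝ| ≤ E r := fun r => by
    have h := abs_real_inner_le_norm (p r) (q r)
    rw [abs_mul, abs_mul, abs_two]
    calc 2 * |κ| * |⟪p r, q r⟫_ℝ| ≤ 2 * |κ| * (‖p r‖ * ‖q r‖) := by gcongr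
      _ ≤ ‖q r‖ ^ 2 + κ ^ 2 * ‖p r‖ ^ 2 := by
          nlinarith [sq_nonneg (‖q r‖ - |κ| * ‖p r‖), sq_abs κ]
  have hE' : ∀ r ∈ Ioi a, 0 ≤ 2 * M / r ^ 2 * ⟪p r, q r⟫_ℝ + |M| / |κ| / r ^ 2 * E r :=
      fun r hr => by
    have hr0 : 0 < r := ha.trans_lt hr
    have := abs_pos.2 hκ
    have hbound : |M * (2 * κ * ⟪p r, q r⟫_ℝ) / (κ * r ^ 2)| ≤ |M| / |κ| / r ^ 2 * E r := by
      rw [abs_div, abs_mul, abs_mul κ, abs_of_pos (pow_pos hr0 2), div_div, div_mul_eq_mul_div]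
      gcongr
      exact hinner r
    have hrw : 2 * M / r ^ 2 * ⟪p r, q r⟫_ℝ = M * (2 * κ * ⟪p r, q r⟫_ℝ) / (κ * r ^ 2) := by
      field_simp
    rw [hrw]
    linarith [neg_le_of_abs_le hbound]
  have hElim : Tendsto E atTop (𝓝 0) := by
    simpa [E] using (hq0.norm.pow 2).add ((hp0.norm.pow 2).const_mul (κ ^ 2))
  have hEr : E r ≤ 0 := nonpos_of_tendsto_zero_of_hasDerivAt ha hE hE' hElim hr
  have hpr : κ ^ 2 * ‖p r‖ ^ 2 ≤ 0 := by nlinarith [sq_nonneg ‖q r‖]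
  have hκ2 : 0 < κ ^ 2 := by positivity
  rw [← norm_eq_zero, ← sq_eq_zero_iff]
  exact le_antisymm (nonpos_of_mul_nonpos_right hpr hκ2) (sq_nonneg _)

/-- `f`, with derivative `f'`, solves Bessel's equation `f'' + f' / r + (κ² - N / r²) f = 0` on `s`;
the order of the equation is `√N`. -/
structure IsBesselSolution [NormedSpace ℝ F] (κ N : ℝ) (s : Set ℝ) (f f' : ℝ → F) : Prop where
  hasDerivAt : ∀ r ∈ s, HasDerivAt f (f' r) r
  hasDerivAt_deriv : ∀ r ∈ s, HasDerivAt f' (-(r⁻¹ • f' r) - (κ ^ 2 - N / r ^ 2) • f r) r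

variable {κ N a : ℝ} {f f' : ℝ → F}

/-- Liouville's substitution `p = √r • f` removes the first-order term of Bessel's equation. -/
lemma IsBesselSolution.hasDerivAt_sqrt_smul [NormedSpace ℝ F] {s : Set ℝ}
    (h : IsBesselSolution κ N s f f') {r : ℝ} (hr : r ∈ s) (hr0 : 0 < r) :
    HasDerivAt (fun r => √r • f r) (√r • f' r + (2 * √r)⁻¹ • f r) r ∧
    HasDerivAt (fun r => √r • f' r + (2 * √r)⁻¹ • f r)
      (((N - 1 / 4) / r ^ 2 - κ ^ 2) • √r • f r) r := by
  have hsqrt := hasDerivAt_sqrt hr0.ne'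
  have hsqrt0 : 0 < √r := sqrt_pos.2 hr0
  refine ⟨(hsqrt.smul (h.hasDerivAt r hr)).congr_deriv (by rw [one_div]), ?_⟩
  refine ((hsqrt.smul (h.hasDerivAt_deriv r hr)).add
    (((hsqrt.const_mul 2).inv (by positivity)).smul (h.hasDerivAt r hr))).congr_deriv ?_
  obtain ⟨s, hs, rfl⟩ : ∃ s, 0 < s ∧ r = s ^ 2 := ⟨√r, hsqrt0, (sq_sqrt hr0.le).symm⟩
  simp only [Pi.inv_apply, sqrt_sq hs.le]
  match_scalars <;> field_simp <;> ring

theorem IsBesselSolution.eq_zero_of_tendsto_zero [InnerProductSpace ℝ F] (hκ : κ ≠ 0) (ha : 0 ≤ a)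
    (h : IsBesselSolution κ N (Ioi a) f f') (hf : Tendsto (fun r => √r • f r) atTop (𝓝 0))
    (hf' : Tendsto (fun r => √r • f' r) atTop (𝓝 0)) {r : ℝ} (hr : r ∈ Ioi a) : f r = 0 := by
  have hsmall : Tendsto (fun r : ℝ => (2 * r)⁻¹) atTop (𝓝 0) :=
    tendsto_inv_atTop_zero.comp (tendsto_id.const_mul_atTop two_pos)
  have hq : Tendsto (fun r => √r • f' r + (2 * √r)⁻¹ • f r) atTop (𝓝 0) := by
    have hlim := hf'.add (hsmall.smul hf)
    rw [smul_zero, add_zero] at hlim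
    refine hlim.congr' ?_
    filter_upwards [eventually_gt_atTop 0] with r hr0
    have := sqrt_pos.2 hr0
    rw [smul_smul]
    congr 2
    field_simp
    rw [sq_sqrt hr0.le]
  have hp := eq_zero_of_tendsto_zero_of_oscillator hκ ha
    (fun r hr => (h.hasDerivAt_sqrt_smul hr (ha.trans_lt hr)).1)
    (fun r hr => (h.hasDerivAt_sqrt_smul hr (ha.trans_lt hr)).2) hf hq hr
  exact (smul_eq_zero.1 hp).resolve_left (sqrt_pos.2 (ha.trans_lt hr)).ne'

end BesselEquation

section BesselSeries

/-- The Taylor coefficients of `besselSeries m`, normalised so that the `0`-th one is `1`. -/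
def besselCoeff (m k : ℕ) : ℂ := (-1) ^ k * (m.factorial / (k.factorial * (m + k).factorial))

/-- The entire function `x ↦ m! x ^ (-m / 2) J_m (2 √x)`, where `J_m` is the Bessel function. -/
def besselSeries (m : ℕ) (x : ℂ) : ℂ := ∑' k, besselCoeff m k * x ^ k

lemma norm_besselCoeff_le (m k : ℕ) : ‖besselCoeff m k‖ ≤ (k.factorial : ℝ)⁻¹ := by
  have h : (m.factorial : ℝ) ≤ (m + k).factorial := by
    exact_mod_cast Nat.factorial_le (Nat.le_add_right m k)
  simp only [besselCoeff, norm_mul, norm_pow, norm_neg, norm_one, one_pow, one_mul, norm_div,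
    Complex.norm_natCast]
  rw [div_le_iff₀ (by positivity), inv_mul_cancel_left₀ (by positivity)]
  exact h

@[simp] lemma besselCoeff_zero (m : ℕ) : besselCoeff m 0 = 1 := by
  simp [besselCoeff, Nat.factorial_ne_zero]

lemma besselCoeff_succ (m k : ℕ) :
    (k + 1) * besselCoeff m (k + 1) = -(besselCoeff (m + 1) k / (m + 1)) := by
  have hm := Nat.cast_add_one_ne_zero (R := ℂ) m
  have hfac := Nat.cast_ne_zero (R := ℂ).2 (m + k + 1).factorial_ne_zero
  have hk := Nat.cast_ne_zero (R := ℂ).2 k.factorial_ne_zero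
  rw [besselCoeff, besselCoeff, ← add_assoc, add_right_comm m 1 k, Nat.factorial_succ k,
    Nat.factorial_succ m]
  push_cast
  field_simp
  ring

lemma besselCoeff_contiguous (m k : ℕ) : besselCoeff (m + 1) (k + 1) - besselCoeff m (k + 1) =
    besselCoeff (m + 2) k / ((m + 1) * (m + 2)) := by
  have hm := Nat.cast_add_one_ne_zero (R := ℂ) m
  have hm' : (m + 2 : ℂ) ≠ 0 := by exact_mod_cast (m + 1).succ_ne_zero
  have hmk : (m + k + 1 : ℂ) ≠ 0 := by exact_mod_cast (m + k).succ_ne_zero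
  have hmk' : (m + k + 1 + 1 : ℂ) ≠ 0 := by exact_mod_cast (m + k + 1).succ_ne_zero
  have hfac := Nat.cast_ne_zero (R := ℂ).2 (m + k).factorial_ne_zero
  have hk := Nat.cast_ne_zero (R := ℂ).2 k.factorial_ne_zero
  rw [besselCoeff, besselCoeff, besselCoeff, show m + 1 + (k + 1) = m + k + 1 + 1 by ring,
    show m + 2 + k = m + k + 1 + 1 by ring, ← add_assoc]
  simp only [Nat.factorial_succ]
  push_cast
  field_simp
  ring

lemma summable_besselCoeff (m : ℕ) (x : ℂ) : Summable fun k => besselCoeff m k * x ^ k := by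
  refine Summable.of_norm_bounded (summable_pow_div_factorial ‖x‖) fun k => ?_
  rw [norm_mul, norm_pow, div_eq_inv_mul]
  gcongr
  exact norm_besselCoeff_le m k

lemma besselSeries_eq_one_add (m : ℕ) (x : ℂ) :
    besselSeries m x = 1 + ∑' k, besselCoeff m (k + 1) * x ^ (k + 1) := by
  rw [besselSeries, (summable_besselCoeff m x).tsum_eq_zero_add]
  simp

theorem hasDerivAt_besselSeries (m : ℕ) (x : ℂ) :
    HasDerivAt (besselSeries m) (-(besselSeries (m + 1) x / (m + 1))) x := by
  have hterm : ∀ (k : ℕ) (y : ℂ), HasDerivAt (fun z => besselCoeff m (k + 1) * z ^ (k + 1))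
      (-(besselCoeff (m + 1) k * y ^ k / (m + 1))) y := fun k y => by
    refine ((hasDerivAt_pow (k + 1) y).const_mul _).congr_deriv ?_
    push_cast [Nat.add_sub_cancel]
    linear_combination y ^ k * besselCoeff_succ m k
  have hbound : ∀ k, ∀ y ∈ Metric.ball (0 : ℂ) (‖x‖ + 1),
      ‖-(besselCoeff (m + 1) k * y ^ k / (m + 1))‖ ≤ (‖x‖ + 1) ^ k / k.factorial :=
      fun k y hy => by
    have hm : 1 ≤ ‖(m + 1 : ℂ)‖ := by
      rw [← Nat.cast_add_one, Complex.norm_natCast]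
      exact_mod_cast Nat.le_add_left 1 m
    rw [norm_neg, norm_div, norm_mul, norm_pow, div_eq_inv_mul (_ ^ k)]
    refine (div_le_self (by positivity) hm).trans ?_
    have := (mem_ball_zero_iff.1 hy).le
    gcongr
    exact norm_besselCoeff_le _ k
  have hderiv := hasDerivAt_tsum_of_isPreconnected (summable_pow_div_factorial (‖x‖ + 1))
    Metric.isOpen_ball (convex_ball (0 : ℂ) _).isPreconnected (fun k y _ => hterm k y) hbound
    (Metric.mem_ball_self (by positivity)) (by simp)
    (mem_ball_zero_iff.2 (lt_add_one ‖x‖))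
  rw [tsum_neg, tsum_div_const] at hderiv
  exact funext (besselSeries_eq_one_add m) ▸ hderiv.const_add 1

lemma besselSeries_contiguous (m : ℕ) (x : ℂ) : besselSeries (m + 1) x - besselSeries m x =
    x * besselSeries (m + 2) x / ((m + 1) * (m + 2)) := by
  have hsum := fun m => (summable_nat_add_iff 1).2 (summable_besselCoeff m x)
  rw [besselSeries_eq_one_add, besselSeries_eq_one_add, add_sub_add_left_eq_sub,
    ← (hsum (m + 1)).tsum_sub (hsum m), besselSeries, ← tsum_mul_left, ← tsum_div_const]
  refine tsum_congr fun k => ?_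
  linear_combination x ^ (k + 1) * besselCoeff_contiguous m k

lemma norm_besselSeries_sub_one_le (m : ℕ) (x : ℂ) :
    ‖besselSeries m x - 1‖ ≤ exp ‖x‖ - 1 := by
  have hexp : HasSum (fun k : ℕ => ‖x‖ ^ (k + 1) / (k + 1).factorial) (exp ‖x‖ - 1) := by
    have h := (hasSum_nat_add_iff' 1).2 (NormedSpace.expSeries_div_hasSum_exp ‖x‖)
    simpa [← Real.exp_eq_exp_ℝ] using h
  rw [besselSeries_eq_one_add, add_sub_cancel_left]
  refine tsum_of_norm_bounded hexp fun k => ?_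
  rw [norm_mul, norm_pow, div_eq_inv_mul]
  gcongr
  exact norm_besselCoeff_le m _

end BesselSeries

section RegularSolution

/-- The solution of Bessel's equation of order `m` which is regular at `0`, normalised so that its
leading term is `r ^ m`; it is `m! (2 / κ) ^ m J_m (κ r)` if `κ ≠ 0`. -/
def besselRegular (κ : ℝ) (m : ℕ) (r : ℝ) : ℂ := r ^ m * besselSeries m ((κ * r / 2) ^ 2)

/-- The derivative of `besselRegular κ m` away from `0`. -/
def besselRegularDeriv (κ : ℝ) (m : ℕ) (r : ℝ) : ℂ :=
  r ^ m * (m * besselSeries m ((κ * r / 2) ^ 2) -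
    2 * (κ * r / 2) ^ 2 / (m + 1) * besselSeries (m + 1) ((κ * r / 2) ^ 2)) / r

lemma hasDerivAt_ofReal_pow (m : ℕ) {r : ℝ} (hr : r ≠ 0) :
    HasDerivAt (fun r : ℝ => (r : ℂ) ^ m) (m * r ^ m / r) r := by
  have hr' : (r : ℂ) ≠ 0 := Complex.ofReal_ne_zero.2 hr
  refine ((hasDerivAt_id r).ofReal_comp.pow m).congr_deriv ?_
  rcases m with _ | m
  · simp
  · simp only [id, Nat.add_sub_cancel, Complex.ofReal_one, mul_one, pow_succ]
    field_simp

lemma hasDerivAt_besselSeries_comp_sq (κ : ℝ) (m : ℕ) (r : ℝ) :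
    HasDerivAt (fun r : ℝ => besselSeries m ((κ * r / 2) ^ 2))
      (-(besselSeries (m + 1) ((κ * r / 2) ^ 2) / (m + 1)) * (κ ^ 2 * r / 2)) r := by
  have hsq : HasDerivAt (fun r : ℝ => (κ * r / 2 : ℂ) ^ 2) (κ ^ 2 * r / 2) r := by
    refine ((((hasDerivAt_id r).ofReal_comp.const_mul (κ : ℂ)).div_const 2).pow 2).congr_deriv ?_
    simp only [id, Complex.ofReal_one]
    ring
  exact (hasDerivAt_besselSeries m _).comp r hsq

lemma continuous_besselSeries (m : ℕ) : Continuous (besselSeries m) :=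
  continuous_iff_continuousAt.2 fun x => (hasDerivAt_besselSeries m x).continuousAt

theorem isBesselSolution_besselRegular (κ : ℝ) (m : ℕ) :
    IsBesselSolution κ (m ^ 2) {0}ᶜ (besselRegular κ m) (besselRegularDeriv κ m) where
  hasDerivAt r hr := by
    refine ((hasDerivAt_ofReal_pow m hr).mul
      (hasDerivAt_besselSeries_comp_sq κ m r)).congr_deriv ?_
    have hr' : (r : ℂ) ≠ 0 := Complex.ofReal_ne_zero.2 hr
    rw [besselRegularDeriv]
    field_simp
    ring
  hasDerivAt_deriv r hr := by
    have hr' : (r : ℂ) ≠ 0 := Complex.ofReal_ne_zero.2 hr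
    have hm := Nat.cast_add_one_ne_zero (R := ℂ) m
    have hm' : (m + 2 : ℂ) ≠ 0 := by exact_mod_cast (m + 1).succ_ne_zero
    have hsq : HasDerivAt (fun r : ℝ => 2 * (κ * r / 2 : ℂ) ^ 2 / (m + 1))
        ((κ ^ 2 * r : ℂ) / (m + 1)) r := by
      refine (((((hasDerivAt_id r).ofReal_comp.const_mul (κ : ℂ)).div_const 2).pow 2).const_mul
        2 |>.div_const _).congr_deriv ?_
      simp only [id, Complex.ofReal_one]
      ring
    refine (((hasDerivAt_ofReal_pow m hr).mul
      (((hasDerivAt_besselSeries_comp_sq κ m r).const_mul (m : ℂ)).sub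
        (hsq.mul (hasDerivAt_besselSeries_comp_sq κ (m + 1) r)))).div
          (hasDerivAt_id r).ofReal_comp hr').congr_deriv ?_
    have hcontig := besselSeries_contiguous m ((κ * r / 2) ^ 2)
    rw [sub_eq_iff_eq_add'] at hcontig
    simp only [besselRegular, besselRegularDeriv, id, Pi.sub_apply, Pi.mul_apply,
      Complex.real_smul, hcontig, add_assoc m 1 1, one_add_one_eq_two]
    push_cast
    rw [add_assoc (m : ℂ) 1 1, one_add_one_eq_two]
    generalize besselSeries m _ = S₀, besselSeries (m + 2) _ = S₂
    field_simp
    ring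

lemma tendsto_mul_besselRegular (κ : ℝ) (m : ℕ) :
    Tendsto (fun r : ℝ => r * besselRegular κ m r) (𝓝[>] 0) (𝓝 0) := by
  have hcont : Continuous fun r : ℝ => r * besselRegular κ m r := by
    have := continuous_besselSeries m
    unfold besselRegular
    fun_prop
  exact (hcont.tendsto' 0 0 (by simp)).mono_left nhdsWithin_le_nhds

lemma tendsto_mul_besselRegularDeriv (κ : ℝ) (m : ℕ) :
    Tendsto (fun r : ℝ => r * besselRegularDeriv κ m r) (𝓝[>] 0) (𝓝 0) := by
  have hcont : Continuous fun r : ℝ => (r : ℂ) ^ m * (m * besselSeries m ((κ * r / 2) ^ 2) -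
      2 * (κ * r / 2) ^ 2 / (m + 1) * besselSeries (m + 1) ((κ * r / 2) ^ 2)) := by
    have := continuous_besselSeries m
    have := continuous_besselSeries (m + 1)
    fun_prop
  refine ((hcont.tendsto' 0 0 ?_).mono_left nhdsWithin_le_nhds).congr' ?_
  · rcases m with _ | m <;> simp
  · filter_upwards [self_mem_nhdsWithin] with r hr
    rw [besselRegularDeriv, mul_div_cancel₀ _ (Complex.ofReal_ne_zero.2 (ne_of_gt hr))]

lemma norm_besselSeries_sub_one_le_half {κ r : ℝ} (m : ℕ) (hr : 0 ≤ r) (hκr : |κ| * r ≤ 1) :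
    ‖besselSeries m ((κ * r / 2) ^ 2) - 1‖ ≤ 1 / 2 := by
  have hy : ‖(κ * r / 2 : ℂ) ^ 2‖ ≤ 1 / 4 := by
    rw [norm_pow, norm_div, norm_mul, Complex.norm_real, Complex.norm_real, Complex.norm_ofNat,
      Real.norm_eq_abs, Real.norm_of_nonneg hr]
    nlinarith [mul_nonneg (abs_nonneg κ) hr]
  have hexp : exp (1 / 4) ≤ 3 / 2 := by
    have h := Real.abs_exp_sub_one_le (x := 1 / 4) (by norm_num [abs_of_pos])
    norm_num [abs_of_pos] at h
    linarith [le_abs_self (exp (1 / 4) - 1)]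
  linarith [norm_besselSeries_sub_one_le m ((κ * r / 2) ^ 2), exp_le_exp.2 hy]

lemma pow_le_two_mul_norm_besselRegular {κ r : ℝ} (m : ℕ) (hr : 0 ≤ r) (hκr : |κ| * r ≤ 1) :
    r ^ m ≤ 2 * ‖besselRegular κ m r‖ := by
  have hS : 1 / 2 ≤ ‖besselSeries m ((κ * r / 2) ^ 2)‖ := by
    have h := norm_sub_norm_le (1 : ℂ) (1 - besselSeries m ((κ * r / 2) ^ 2))
    rw [sub_sub_cancel, norm_one, norm_sub_rev] at h
    linarith [norm_besselSeries_sub_one_le_half m hr hκr]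
  rw [besselRegular, norm_mul, norm_pow, Complex.norm_real, Real.norm_of_nonneg hr]
  nlinarith [pow_nonneg hr m]

lemma norm_besselRegular_le {κ r : ℝ} (m : ℕ) (hr : 0 ≤ r) (hκr : |κ| * r ≤ 1) :
    ‖besselRegular κ m r‖ ≤ 2 * r ^ m := by
  have hS : ‖besselSeries m ((κ * r / 2) ^ 2)‖ ≤ 2 := by
    have h := norm_sub_norm_le (besselSeries m ((κ * r / 2) ^ 2)) 1
    rw [norm_one] at h
    linarith [norm_besselSeries_sub_one_le_half m hr hκr]
  rw [besselRegular, norm_mul, norm_pow, Complex.norm_real, Real.norm_of_nonneg hr, mul_comm]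
  gcongr

end RegularSolution

section Wronskian

variable {κ N R₀ M : ℝ} {s : Set ℝ} {f f' j j' : ℝ → ℂ}

lemma IsBesselSolution.hasDerivAt_wronskian (hf : IsBesselSolution κ N s f f')
    (hj : IsBesselSolution κ N s j j') {r : ℝ} (hr : r ∈ s) (hr0 : r ≠ 0) :
    HasDerivAt (fun r : ℝ => (r : ℂ) * (f r * j' r - f' r * j r)) 0 r := by
  have hr' : (r : ℂ) ≠ 0 := Complex.ofReal_ne_zero.2 hr0
  refine ((hasDerivAt_id r).ofReal_comp.mul (((hf.hasDerivAt r hr).mul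
    (hj.hasDerivAt_deriv r hr)).sub ((hf.hasDerivAt_deriv r hr).mul
      (hj.hasDerivAt r hr)))).congr_deriv ?_
  simp only [id, Pi.sub_apply, Pi.mul_apply, Complex.real_smul, Complex.ofReal_one,
    Complex.ofReal_inv]
  field_simp
  ring

/-- The Wronskian with `j` is constant and tends to `0` at the singular point. -/
lemma IsBesselSolution.mul_deriv_eq_deriv_mul (hf : IsBesselSolution κ N (Ioo 0 R₀) f f')
    (hj : IsBesselSolution κ N (Ioo 0 R₀) j j') (hfM : ∀ r ∈ Ioo 0 R₀, ‖f r‖ ≤ M)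
    (hfM' : ∀ r ∈ Ioo 0 R₀, ‖f' r‖ ≤ M) (hj0 : Tendsto (fun r => r * j r) (𝓝[>] 0) (𝓝 0))
    (hj0' : Tendsto (fun r => r * j' r) (𝓝[>] 0) (𝓝 0)) {r : ℝ} (hr : r ∈ Ioo 0 R₀) :
    f r * j' r = f' r * j r := by
  set W : ℝ → ℂ := fun r => r * (f r * j' r - f' r * j r) with hW
  have hWd : ∀ ρ ∈ Ioo 0 R₀, HasDerivAt W 0 ρ := fun ρ hρ => hf.hasDerivAt_wronskian hj hρ hρ.1.ne'
  have hWc : ∀ ρ ∈ Ioo 0 R₀, W ρ = W r := fun ρ hρ =>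
    isOpen_Ioo.is_const_of_deriv_eq_zero isPreconnected_Ioo
      (fun ρ hρ => (hWd ρ hρ).differentiableAt.differentiableWithinAt)
      (fun ρ hρ => (hWd ρ hρ).deriv) hρ hr
  have hWr : W r = 0 := by
    have hlim : Tendsto (fun r => M * ‖r * j' r‖ + M * ‖r * j r‖) (𝓝[>] 0) (𝓝 0) := by
      simpa using (hj0'.norm.const_mul M).add (hj0.norm.const_mul M)
    rw [← norm_le_zero_iff]
    refine ge_of_tendsto hlim ?_
    filter_upwards [Ioo_mem_nhdsGT (hr.1.trans hr.2)] with ρ hρ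
    rw [← hWc ρ hρ, hW]
    calc ‖ρ * (f ρ * j' ρ - f' ρ * j ρ)‖ = ‖f ρ * (ρ * j' ρ) - f' ρ * (ρ * j ρ)‖ := by ring_nf
      _ ≤ ‖f ρ‖ * ‖ρ * j' ρ‖ + ‖f' ρ‖ * ‖ρ * j ρ‖ := by
          simpa only [norm_mul] using norm_sub_le (f ρ * (ρ * j' ρ)) (f' ρ * (ρ * j ρ))
      _ ≤ M * ‖ρ * j' ρ‖ + M * ‖ρ * j ρ‖ := by
          gcongr
          · exact hfM ρ hρ
          · exact hfM' ρ hρ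
  exact sub_eq_zero.1 ((mul_eq_zero.1 hWr).resolve_left (Complex.ofReal_ne_zero.2 hr.1.ne'))

theorem IsBesselSolution.eq_mul_of_bounded (hf : IsBesselSolution κ N (Ioo 0 R₀) f f')
    (hj : IsBesselSolution κ N (Ioo 0 R₀) j j') (hfM : ∀ r ∈ Ioo 0 R₀, ‖f r‖ ≤ M)
    (hfM' : ∀ r ∈ Ioo 0 R₀, ‖f' r‖ ≤ M) (hj0 : Tendsto (fun r => r * j r) (𝓝[>] 0) (𝓝 0))
    (hj0' : Tendsto (fun r => r * j' r) (𝓝[>] 0) (𝓝 0)) (hjne : ∀ r ∈ Ioo 0 R₀, j r ≠ 0) {r R : ℝ}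
    (hr : r ∈ Ioo 0 R₀) (hR : R ∈ Ioo 0 R₀) : f r = f R / j R * j r := by
  have hquot : ∀ ρ ∈ Ioo 0 R₀, HasDerivAt (fun ρ => f ρ / j ρ) 0 ρ := fun ρ hρ => by
    refine ((hf.hasDerivAt ρ hρ).div (hj.hasDerivAt ρ hρ) (hjne ρ hρ)).congr_deriv ?_
    rw [hf.mul_deriv_eq_deriv_mul hj hfM hfM' hj0 hj0' hρ, sub_self, zero_div]
  rw [← div_eq_iff (hjne r hr)]
  exact isOpen_Ioo.is_const_of_deriv_eq_zero isPreconnected_Ioo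
    (fun ρ hρ => (hquot ρ hρ).differentiableAt.differentiableWithinAt)
    (fun ρ hρ => (hquot ρ hρ).deriv) hr hR

lemma IsBesselSolution.mono {t : Set ℝ} (h : IsBesselSolution κ N t f f') (hst : s ⊆ t) :
    IsBesselSolution κ N s f f' :=
  ⟨fun r hr => h.hasDerivAt r (hst hr), fun r hr => h.hasDerivAt_deriv r (hst hr)⟩

theorem IsBesselSolution.exists_eq_mul_besselRegular {m : ℕ}
    (hf : IsBesselSolution κ (m ^ 2) (Ioo 0 R₀) f f') (hfM : ∀ r ∈ Ioo 0 R₀, ‖f r‖ ≤ M)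
    (hfM' : ∀ r ∈ Ioo 0 R₀, ‖f' r‖ ≤ M) (hR₀ : 0 < R₀) (hκR₀ : |κ| * R₀ ≤ 1) :
    ∃ d : ℂ, ‖d‖ ≤ 2 * M / (R₀ / 2) ^ m ∧ ∀ r ∈ Ioo 0 R₀, f r = d * besselRegular κ m r := by
  have hR : R₀ / 2 ∈ Ioo 0 R₀ := ⟨half_pos hR₀, half_lt_self hR₀⟩
  have hlower : ∀ r ∈ Ioo 0 R₀, r ^ m ≤ 2 * ‖besselRegular κ m r‖ := fun r hr =>
    pow_le_two_mul_norm_besselRegular m hr.1.le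
      ((mul_le_mul_of_nonneg_left hr.2.le (abs_nonneg κ)).trans hκR₀)
  have hpos : ∀ r ∈ Ioo 0 R₀, 0 < ‖besselRegular κ m r‖ := fun r hr => by
    linarith [hlower r hr, pow_pos hr.1 m]
  refine ⟨f (R₀ / 2) / besselRegular κ m (R₀ / 2), ?_, fun r hr => hf.eq_mul_of_bounded
    ((isBesselSolution_besselRegular κ m).mono fun r hr => hr.1.ne') hfM hfM'
    (tendsto_mul_besselRegular κ m) (tendsto_mul_besselRegularDeriv κ m)
    (fun r hr => norm_pos_iff.1 (hpos r hr)) hr hR⟩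
  have hM : 0 ≤ M := (norm_nonneg _).trans (hfM _ hR)
  rw [norm_div, div_le_div_iff₀ (hpos _ hR) (pow_pos hR.1 m)]
  nlinarith [hfM _ hR, hlower _ hR, norm_nonneg (f (R₀ / 2)), pow_pos hR.1 m]

end Wronskian

section Helmholtz

variable {E E' F F' : Type*} [NormedAddCommGroup E] [InnerProductSpace ℝ E] [FiniteDimensional ℝ E]
  [NormedAddCommGroup E'] [InnerProductSpace ℝ E'] [FiniteDimensional ℝ E'] [NormedAddCommGroup F]
  [NormedSpace ℝ F] [NormedAddCommGroup F'] [NormedSpace ℝ F']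

/-- `u` is a classical solution of the Helmholtz equation `Δu + κ²u = 0` on `V`. -/
structure HelmholtzOn (κ : ℝ) (V : Set E) (u : E → F) : Prop where
  contDiffOn : ContDiffOn ℝ 2 u V
  laplacian_add_eq_zero : ∀ x ∈ V, Δ u x + κ ^ 2 • u x = 0

lemma laplacian_comp_linearIsometryEquiv (e : E' ≃ₗᵢ[ℝ] E) (u : E → F) (x : E') :
    Δ (u ∘ e) x = Δ u (e x) := by
  have hiter := e.toContinuousLinearEquiv.iteratedFDerivWithin_comp_right u uniqueDiffOn_univ
    (mem_univ (e x)) 2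
  simp only [preimage_univ, iteratedFDerivWithin_univ] at hiter
  rw [laplacian_eq_iteratedFDeriv_orthonormalBasis (u ∘ e) (stdOrthonormalBasis ℝ E'),
    laplacian_eq_iteratedFDeriv_orthonormalBasis u ((stdOrthonormalBasis ℝ E').map e)]
  refine Finset.sum_congr rfl fun i _ => ?_
  refine (DFunLike.congr_fun hiter _).trans ((ContinuousMultilinearMap.compContinuousLinearMap_apply
    _ _ _).trans (congrArg (iteratedFDeriv ℝ 2 u (e x)) (funext fun j => ?_)))
  fin_cases j <;> rfl

lemma laplacian_eq_sum_fderiv_fderiv {ι : Type*} [Fintype ι] (b : OrthonormalBasis ι ℝ E)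
    (u : E → F) (x : E) : Δ u x = ∑ i, fderiv ℝ (fderiv ℝ u) x (b i) (b i) := by
  simp [laplacian_eq_iteratedFDeriv_orthonormalBasis u b, iteratedFDeriv_two_apply]

lemma laplacian_eq_fderiv_fderiv_circle (u : ℂ → F) (x : ℂ) (ζ : Circle) :
    Δ u x = fderiv ℝ (fderiv ℝ u) x ζ ζ +
      fderiv ℝ (fderiv ℝ u) x (Complex.I * ζ) (Complex.I * ζ) := by
  rw [laplacian_eq_sum_fderiv_fderiv (Complex.orthonormalBasisOneI.map (rotation ζ)),
    Fin.sum_univ_two]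
  simp [mul_comm Complex.I]

variable {κ : ℝ} {V W : Set E} {u v : E → F}

namespace HelmholtzOn

lemma mono (hu : HelmholtzOn κ V u) (hWV : W ⊆ V) : HelmholtzOn κ W u :=
  ⟨hu.contDiffOn.mono hWV, fun x hx => hu.laplacian_add_eq_zero x (hWV hx)⟩

lemma contDiffAt (hu : HelmholtzOn κ V u) (hV : IsOpen V) {x : E} (hx : x ∈ V) :
    ContDiffAt ℝ 2 u x :=
  hu.contDiffOn.contDiffAt (hV.mem_nhds hx)

lemma hasFDerivAt (hu : HelmholtzOn κ V u) (hV : IsOpen V) {x : E} (hx : x ∈ V) :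
    HasFDerivAt u (fderiv ℝ u x) x :=
  ((hu.contDiffAt hV hx).differentiableAt two_ne_zero).hasFDerivAt

lemma sub (hV : IsOpen V) (hu : HelmholtzOn κ V u) (hv : HelmholtzOn κ V v) :
    HelmholtzOn κ V (u - v) := by
  refine ⟨hu.contDiffOn.sub hv.contDiffOn, fun x hx => ?_⟩
  rw [(hu.contDiffAt hV hx).laplacian_sub (hv.contDiffAt hV hx), Pi.sub_apply, smul_sub,
    sub_add_sub_comm, hu.laplacian_add_eq_zero x hx, hv.laplacian_add_eq_zero x hx, sub_zero]

lemma clm_comp (hV : IsOpen V) (hu : HelmholtzOn κ V u) (L : F →L[ℝ] F') :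
    HelmholtzOn κ V (L ∘ u) := by
  refine ⟨L.contDiff.comp_contDiffOn hu.contDiffOn, fun x hx => ?_⟩
  rw [(hu.contDiffAt hV hx).laplacian_CLM_comp_left, Function.comp_apply, Function.comp_apply,
    ← map_smul, ← map_add, hu.laplacian_add_eq_zero x hx, map_zero]

lemma comp_linearIsometryEquiv (hu : HelmholtzOn κ V u) (e : E' ≃ₗᵢ[ℝ] E) :
    HelmholtzOn κ (e ⁻¹' V) (u ∘ e) := by
  refine ⟨hu.contDiffOn.comp e.contDiff.contDiffOn (mapsTo_preimage e V), fun x hx => ?_⟩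
  rw [laplacian_comp_linearIsometryEquiv]
  exact hu.laplacian_add_eq_zero (e x) hx

end HelmholtzOn

end Helmholtz

section Plane

variable {κ : ℝ} {V : Set R2} {u : R2 → ℂ}

lemma laplacian2_eq_laplacian {x : R2} (hu : ContDiffAt ℝ 2 u x) : laplacian2 u x = Δ u x := by
  have hdiff : DifferentiableAt ℝ (fderiv ℝ u) x :=
    (hu.fderiv_right (m := 1) le_rfl).differentiableAt one_ne_zero
  rw [laplacian_eq_sum_fderiv_fderiv (EuclideanSpace.basisFun (Fin 2) ℝ), laplacian2]
  refine Finset.sum_congr rfl fun i _ => ?_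
  rw [fderiv_clm_apply hdiff (differentiableAt_const _)]
  simp

lemma helmholtzOn_iff_laplacian2 (hV : IsOpen V) : HelmholtzOn κ V u ↔
    ContDiffOn ℝ 2 u V ∧ ∀ x ∈ V, laplacian2 u x + (κ : ℂ) ^ 2 * u x = 0 := by
  have heq : ContDiffOn ℝ 2 u V → ∀ x ∈ V,
      laplacian2 u x + (κ : ℂ) ^ 2 * u x = Δ u x + κ ^ 2 • u x := fun hu x hx => by
    rw [laplacian2_eq_laplacian (hu.contDiffAt (hV.mem_nhds hx)), Complex.real_smul,
      Complex.ofReal_pow]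
  exact ⟨fun hu => ⟨hu.1, fun x hx => (heq hu.1 x hx).trans (hu.2 x hx)⟩,
    fun hu => ⟨hu.1, fun x hx => (heq hu.1 x hx).symm.trans (hu.2 x hx)⟩⟩

end Plane

section AngularMode

lemma hasDerivAt_toCircle (x : ℝ) :
    HasDerivAt (fun y : ℝ => (AddCircle.toCircle (y : UnitAddCircle) : ℂ))
      (2 * π * Complex.I * AddCircle.toCircle (x : UnitAddCircle)) x := by
  simpa [fourier_one] using hasDerivAt_fourier 1 1 x

lemma continuous_coe_toCircle : Continuous fun t : UnitAddCircle => (t.toCircle : ℂ) :=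
  continuous_subtype_val.comp AddCircle.continuous_toCircle

/-- The `n`-th Fourier coefficient of `u` on the circle of radius `r` about `c`. -/
def angularMode (c : ℂ) (u : ℂ → ℂ) (n : ℤ) (r : ℝ) : ℂ :=
  fourierCoeff (fun t : UnitAddCircle => u (c + r * t.toCircle)) n

/-- The `n`-th Fourier coefficient of the radial derivative of `u` on the circle of radius `r`
about `c`. -/
def angularModeDeriv (c : ℂ) (u : ℂ → ℂ) (n : ℤ) (r : ℝ) : ℂ :=
  fourierCoeff (fun t : UnitAddCircle => fderiv ℝ u (c + r * t.toCircle) t.toCircle) n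

variable {κ r : ℝ} {c : ℂ} {V : Set ℂ} {s : Set ℝ} {u : ℂ → ℂ}

lemma hasDerivAt_add_mul_toCircle (c : ℂ) (t : UnitAddCircle) (r : ℝ) :
    HasDerivAt (fun ρ : ℝ => c + ρ * t.toCircle) t.toCircle r := by
  simpa using (Complex.ofRealCLM.hasDerivAt.mul_const (t.toCircle : ℂ)).const_add c

lemma hasDerivAt_angle_add_mul_toCircle (c : ℂ) (r x : ℝ) :
    HasDerivAt (fun y : ℝ => c + r * AddCircle.toCircle (y : UnitAddCircle))
      ((2 * π * r) • (Complex.I * AddCircle.toCircle (x : UnitAddCircle))) x := by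
  refine (((hasDerivAt_toCircle x).const_mul (r : ℂ)).const_add c).congr_deriv ?_
  simp only [Complex.real_smul]
  push_cast
  ring

lemma norm_ofReal_mul_toCircle (hr : 0 ≤ r) (t : UnitAddCircle) : ‖(r * t.toCircle : ℂ)‖ = r := by
  rw [norm_mul, Complex.norm_real, Circle.norm_coe, mul_one, norm_of_nonneg hr]

lemma continuous_add_mul_toCircle (c : ℂ) :
    Continuous fun q : ℝ × UnitAddCircle => c + q.1 * q.2.toCircle :=
  continuous_const.add <| (Complex.continuous_ofReal.comp continuous_fst).mul
    (continuous_coe_toCircle.comp continuous_snd)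

namespace HelmholtzOn

lemma continuousOn_fderiv (hu : HelmholtzOn κ V u) (hV : IsOpen V) :
    ContinuousOn (fderiv ℝ u) V :=
  hu.contDiffOn.continuousOn_fderiv_of_isOpen hV one_le_two

lemma continuousOn_fderiv_fderiv (hu : HelmholtzOn κ V u) (hV : IsOpen V) :
    ContinuousOn (fderiv ℝ (fderiv ℝ u)) V :=
  (hu.contDiffOn.fderiv_of_isOpen (m := 1) hV le_rfl).continuousOn_fderiv_of_isOpen hV le_rfl

lemma hasDerivAt_comp (hu : HelmholtzOn κ V u) (hV : IsOpen V) {x : ℝ} {f : ℝ → ℂ} {f' : ℂ}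
    (hf : HasDerivAt f f' x) (hx : f x ∈ V) :
    HasDerivAt (fun y => u (f y)) (fderiv ℝ u (f x) f') x :=
  (hu.hasFDerivAt hV hx).comp_hasDerivAt x hf

lemma hasDerivAt_fderiv_apply (hu : HelmholtzOn κ V u) (hV : IsOpen V) {x : ℝ} {f v : ℝ → ℂ}
    {f' v' : ℂ} (hf : HasDerivAt f f' x) (hv : HasDerivAt v v' x) (hx : f x ∈ V) :
    HasDerivAt (fun y => fderiv ℝ u (f y) (v y))
      (fderiv ℝ (fderiv ℝ u) (f x) f' (v x) + fderiv ℝ u (f x) v') x := by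
  have hDu : HasFDerivAt (fderiv ℝ u) (fderiv ℝ (fderiv ℝ u) (f x)) (f x) :=
    ((hu.contDiffAt hV hx).fderiv_right (m := 1) le_rfl).differentiableAt one_ne_zero |>.hasFDerivAt
  exact (hDu.comp_hasDerivAt x hf).clm_apply hv

lemma hasDerivAt_angularMode (hu : HelmholtzOn κ V u) (hV : IsOpen V) (hs : IsOpen s)
    (hsV : ∀ r ∈ s, ∀ t : UnitAddCircle, c + r * t.toCircle ∈ V) (n : ℤ) (hr : r ∈ s) :
    HasDerivAt (angularMode c u n) (angularModeDeriv c u n r) r := by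
  have hcircle := continuous_add_mul_toCircle c
  refine hasDerivAt_fourierCoeff (Φ := fun ρ t => u (c + ρ * t.toCircle))
    (Φ' := fun ρ t => fderiv ℝ u (c + ρ * t.toCircle) t.toCircle) hs
    (fun ρ hρ => ?_) ?_ (fun ρ hρ t => ?_) n hr
  · exact hu.contDiffOn.continuousOn.comp_continuous (hcircle.comp (by fun_prop : Continuous fun
      t : UnitAddCircle => (ρ, t))) (hsV ρ hρ)
  · exact ((hu.continuousOn_fderiv hV).comp hcircle.continuousOn fun q hq => hsV q.1 hq.1 q.2)
      |>.clm_apply (continuous_coe_toCircle.comp continuous_snd).continuousOn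
  · exact (hu.hasFDerivAt hV (hsV ρ hρ t)).comp_hasDerivAt ρ (hasDerivAt_add_mul_toCircle c t ρ)

lemma hasDerivAt_angularModeDeriv (hu : HelmholtzOn κ V u) (hV : IsOpen V) (hs : IsOpen s)
    (hsV : ∀ r ∈ s, ∀ t : UnitAddCircle, c + r * t.toCircle ∈ V) (n : ℤ) (hr : r ∈ s) :
    HasDerivAt (angularModeDeriv c u n) (fourierCoeff (fun t : UnitAddCircle =>
      fderiv ℝ (fderiv ℝ u) (c + r * t.toCircle) t.toCircle t.toCircle) n) r := by
  have hcircle := continuous_add_mul_toCircle c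
  refine hasDerivAt_fourierCoeff (Φ := fun ρ t => fderiv ℝ u (c + ρ * t.toCircle) t.toCircle)
    (Φ' := fun ρ t => fderiv ℝ (fderiv ℝ u) (c + ρ * t.toCircle) t.toCircle t.toCircle) hs
    (fun ρ hρ => ?_) ?_ (fun ρ hρ t => ?_) n hr
  · exact ((hu.continuousOn_fderiv hV).comp_continuous (hcircle.comp (by fun_prop : Continuous fun
      t : UnitAddCircle => (ρ, t))) (hsV ρ hρ)).clm_apply continuous_coe_toCircle
  · have hζ : ContinuousOn (fun q : ℝ × UnitAddCircle => (q.2.toCircle : ℂ)) (s ×ˢ univ) :=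
      (continuous_coe_toCircle.comp continuous_snd).continuousOn
    exact (((hu.continuousOn_fderiv_fderiv hV).comp hcircle.continuousOn
      fun q hq => hsV q.1 hq.1 q.2).clm_apply hζ).clm_apply hζ
  · simpa using hu.hasDerivAt_fderiv_apply hV (hasDerivAt_add_mul_toCircle c t ρ)
      (hasDerivAt_const ρ (t.toCircle : ℂ)) (hsV ρ hρ t)

lemma mul_fourierCoeff_fderiv_tangent (hu : HelmholtzOn κ V u) (hV : IsOpen V)
    (hrV : ∀ t : UnitAddCircle, c + r * t.toCircle ∈ V) (n : ℤ) :
    r * fourierCoeff (fun t : UnitAddCircle =>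
      fderiv ℝ u (c + r * t.toCircle) (Complex.I * t.toCircle)) n =
      Complex.I * n * angularMode c u n r := by
  have := continuous_coe_toCircle
  have hDu := (hu.continuousOn_fderiv hV).comp_continuous
    ((continuous_add_mul_toCircle c).comp (by fun_prop : Continuous fun t => (r, t))) hrV
  have hparts := fourierCoeff_of_hasDerivAt (w := fun t => u (c + r * t.toCircle))
    (w' := fun t => fderiv ℝ u (c + r * t.toCircle) ((2 * π * r) • (Complex.I * t.toCircle)))
    (fun x => hu.hasDerivAt_comp hV (hasDerivAt_angle_add_mul_toCircle c r x) (hrV x))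
    (hDu.clm_apply (by fun_prop)) n
  simp only [map_smul] at hparts
  simp only [Complex.real_smul, fourierCoeff.const_mul] at hparts
  refine mul_left_cancel₀ Complex.two_pi_I_ne_zero (Eq.trans ?_
    (congrArg (Complex.I * ·) hparts) |>.trans ?_)
  · push_cast
    ring
  · rw [angularMode]
    push_cast
    ring

lemma fourierCoeff_fderiv_fderiv_tangent (hu : HelmholtzOn κ V u) (hV : IsOpen V)
    (hrV : ∀ t : UnitAddCircle, c + r * t.toCircle ∈ V) (n : ℤ) :
    fourierCoeff (fun t : UnitAddCircle =>
      r * fderiv ℝ (fderiv ℝ u) (c + r * t.toCircle) (Complex.I * t.toCircle)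
        (Complex.I * t.toCircle) - fderiv ℝ u (c + r * t.toCircle) t.toCircle) n =
      Complex.I * n * fourierCoeff (fun t : UnitAddCircle =>
        fderiv ℝ u (c + r * t.toCircle) (Complex.I * t.toCircle)) n := by
  have hcircle : Continuous fun t : UnitAddCircle => c + r * t.toCircle :=
    (continuous_add_mul_toCircle c).comp (by fun_prop : Continuous fun t => (r, t))
  have := continuous_coe_toCircle
  have hDu := (hu.continuousOn_fderiv hV).comp_continuous hcircle hrV
  have hD2u := (hu.continuousOn_fderiv_fderiv hV).comp_continuous hcircle hrV
  have htangent : ∀ x : ℝ, HasDerivAt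
      (fun y : ℝ => Complex.I * (AddCircle.toCircle (y : UnitAddCircle) : ℂ))
      ((-(2 * π)) • (AddCircle.toCircle (x : UnitAddCircle) : ℂ)) x := fun x => by
    refine ((hasDerivAt_toCircle x).const_mul Complex.I).congr_deriv ?_
    simp only [Complex.real_smul, Complex.ofReal_neg, Complex.ofReal_mul, Complex.ofReal_ofNat]
    linear_combination 2 * π * (AddCircle.toCircle (x : UnitAddCircle) : ℂ) * Complex.I_mul_I
  have hparts := fourierCoeff_of_hasDerivAt
    (w := fun t => fderiv ℝ u (c + r * t.toCircle) (Complex.I * t.toCircle))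
    (w' := fun t => fderiv ℝ (fderiv ℝ u) (c + r * t.toCircle)
      ((2 * π * r) • (Complex.I * t.toCircle)) (Complex.I * t.toCircle) +
      fderiv ℝ u (c + r * t.toCircle) ((-(2 * π)) • t.toCircle))
    (fun x => hu.hasDerivAt_fderiv_apply hV (hasDerivAt_angle_add_mul_toCircle c r x)
      (htangent x) (hrV x))
    (((hD2u.clm_apply (by fun_prop)).clm_apply (by fun_prop)).add (hDu.clm_apply (by fun_prop))) n
  have hscale : ∀ t : UnitAddCircle, fderiv ℝ (fderiv ℝ u) (c + r * t.toCircle)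
      ((2 * π * r) • (Complex.I * t.toCircle)) (Complex.I * t.toCircle) +
      fderiv ℝ u (c + r * t.toCircle) ((-(2 * π)) • t.toCircle) = (2 * π : ℂ) *
      (r * fderiv ℝ (fderiv ℝ u) (c + r * t.toCircle) (Complex.I * t.toCircle)
        (Complex.I * t.toCircle) - fderiv ℝ u (c + r * t.toCircle) t.toCircle) := fun t => by
    rw [map_smul, map_smul, smul_apply, Complex.real_smul, Complex.real_smul]
    push_cast
    ring
  simp only [hscale, fourierCoeff.const_mul] at hparts
  refine mul_left_cancel₀ (mul_ne_zero two_ne_zero (Complex.ofReal_ne_zero.2 pi_ne_zero))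
    (hparts.trans ?_)
  push_cast
  ring

lemma fourierCoeff_fderiv_fderiv_radial (hu : HelmholtzOn κ V u) (hV : IsOpen V) (hr : r ≠ 0)
    (hrV : ∀ t : UnitAddCircle, c + r * t.toCircle ∈ V) (n : ℤ) :
    fourierCoeff (fun t : UnitAddCircle =>
      fderiv ℝ (fderiv ℝ u) (c + r * t.toCircle) t.toCircle t.toCircle) n =
      -(r : ℂ)⁻¹ * fourierCoeff (fun t : UnitAddCircle =>
        r * fderiv ℝ (fderiv ℝ u) (c + r * t.toCircle) (Complex.I * t.toCircle)
          (Complex.I * t.toCircle) - fderiv ℝ u (c + r * t.toCircle) t.toCircle) n +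
      -(r : ℂ)⁻¹ * angularModeDeriv c u n r + -(κ : ℂ) ^ 2 * angularMode c u n r := by
  have hcircle : Continuous fun t : UnitAddCircle => c + r * t.toCircle :=
    (continuous_add_mul_toCircle c).comp (by fun_prop : Continuous fun t => (r, t))
  have hζ := continuous_coe_toCircle
  have hu₀ : Continuous fun t : UnitAddCircle => u (c + r * t.toCircle) :=
    hu.contDiffOn.continuousOn.comp_continuous hcircle hrV
  have hD2u := (hu.continuousOn_fderiv_fderiv hV).comp_continuous hcircle hrV
  have hradial : Continuous fun t : UnitAddCircle => fderiv ℝ u (c + r * t.toCircle) t.toCircle :=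
    ((hu.continuousOn_fderiv hV).comp_continuous hcircle hrV).clm_apply hζ
  have hangular : Continuous fun t : UnitAddCircle =>
      r * fderiv ℝ (fderiv ℝ u) (c + r * t.toCircle) (Complex.I * t.toCircle)
        (Complex.I * t.toCircle) - fderiv ℝ u (c + r * t.toCircle) t.toCircle :=
    (continuous_const.mul ((hD2u.clm_apply (by fun_prop)).clm_apply (by fun_prop))).sub hradial
  have hint : ∀ {w : UnitAddCircle → ℂ} (α : ℂ), Continuous w →
      Integrable (α • w) AddCircle.haarAddCircle := fun α hw =>
    (hw.const_smul α).integrable_of_hasCompactSupport (HasCompactSupport.of_compactSpace _)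
  rw [angularModeDeriv, angularMode, ← smul_eq_mul, ← smul_eq_mul, ← smul_eq_mul,
    ← fourierCoeff.const_smul, ← fourierCoeff.const_smul, ← fourierCoeff.const_smul,
    ← Pi.add_apply, ← fourierCoeff.add (hint _ hangular) (hint _ hradial), ← Pi.add_apply,
    ← fourierCoeff.add ((hint _ hangular).add (hint _ hradial)) (hint _ hu₀)]
  refine congrFun (congrArg fourierCoeff (funext fun t => ?_)) n
  have hHelmholtz := hu.laplacian_add_eq_zero _ (hrV t)
  rw [laplacian_eq_fderiv_fderiv_circle u _ t.toCircle, Complex.real_smul] at hHelmholtz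
  simp only [Pi.add_apply, Pi.smul_apply, smul_eq_mul]
  push_cast at hHelmholtz
  linear_combination hHelmholtz + fderiv ℝ (fderiv ℝ u) (c + r * t.toCircle)
    (Complex.I * t.toCircle) (Complex.I * t.toCircle) *
    mul_inv_cancel₀ (Complex.ofReal_ne_zero.2 hr)

lemma isBesselSolution_angularMode (hu : HelmholtzOn κ V u) (hV : IsOpen V) (hs : IsOpen s)
    (hs₀ : ∀ r ∈ s, r ≠ 0) (hsV : ∀ r ∈ s, ∀ t : UnitAddCircle, c + r * t.toCircle ∈ V) (n : ℤ) :
    IsBesselSolution κ (n ^ 2) s (angularMode c u n) (angularModeDeriv c u n) := by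
  refine ⟨fun r hr => hu.hasDerivAt_angularMode hV hs hsV n hr, fun r hr =>
    (hu.hasDerivAt_angularModeDeriv hV hs hsV n hr).congr_deriv ?_⟩
  have hr₀ : (r : ℂ) ≠ 0 := Complex.ofReal_ne_zero.2 (hs₀ r hr)
  have htangent := hu.mul_fourierCoeff_fderiv_tangent hV (hsV r hr) n
  rw [hu.fourierCoeff_fderiv_fderiv_radial hV (hs₀ r hr) (hsV r hr),
    hu.fourierCoeff_fderiv_fderiv_tangent hV (hsV r hr), eq_div_of_mul_eq hr₀
    ((mul_comm _ _).trans htangent), Complex.real_smul, Complex.real_smul]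
  push_cast
  field_simp
  linear_combination -(n : ℂ) ^ 2 * angularMode c u n r * Complex.I_sq

end HelmholtzOn

end AngularMode

section FourierBessel

variable {κ R₀ : ℝ} {V : Set ℂ} {u : ℂ → ℂ} {c : ℂ}

lemma add_mul_toCircle_mem_closedBall {r : ℝ} (c : ℂ) (hr : r ∈ Icc 0 R₀) (t : UnitAddCircle) :
    c + r * t.toCircle ∈ Metric.closedBall c R₀ := by
  rw [Metric.mem_closedBall, dist_eq_norm, add_sub_cancel_left, norm_ofReal_mul_toCircle hr.1]
  exact hr.2

lemma summable_mul_besselRegular {d : ℤ → ℂ} {C R r : ℝ} (hd : ∀ n, ‖d n‖ ≤ C / R ^ n.natAbs)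
    (hr : r ∈ Ioo 0 R) (hκr : |κ| * r ≤ 1) :
    Summable fun n : ℤ => d n * besselRegular κ n.natAbs r := by
  have hR : 0 < R := hr.1.trans hr.2
  have hgeom : Summable fun n : ℕ => 2 * C * (r / R) ^ n :=
    (summable_geometric_of_lt_one (div_nonneg hr.1.le hR.le)
      ((div_lt_one hR).2 hr.2)).mul_left _
  have hbound : Summable fun n : ℤ => 2 * C * (r / R) ^ n.natAbs :=
    .of_nat_of_neg (by simpa using hgeom) (by simpa using hgeom)
  refine .of_norm_bounded hbound fun n => ?_
  calc ‖d n * besselRegular κ n.natAbs r‖ ≤ C / R ^ n.natAbs * (2 * r ^ n.natAbs) := by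
        rw [norm_mul]
        exact mul_le_mul (hd n) (norm_besselRegular_le _ hr.1.le hκr) (norm_nonneg _)
          ((norm_nonneg _).trans (hd n))
    _ = 2 * C * (r / R) ^ n.natAbs := by
        rw [div_pow]
        ring

namespace HelmholtzOn

lemma exists_angularMode_eq_mul_besselRegular (hu : HelmholtzOn κ V u) (hV : IsOpen V)
    (hR₀ : 0 < R₀) (hκR₀ : |κ| * R₀ ≤ 1) (hball : Metric.closedBall c R₀ ⊆ V) :
    ∃ (C : ℝ) (d : ℤ → ℂ), (∀ n, ‖d n‖ ≤ C / (R₀ / 2) ^ n.natAbs) ∧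
      ∀ n, ∀ r ∈ Ioo 0 R₀, angularMode c u n r = d n * besselRegular κ n.natAbs r := by
  have hmem : ∀ r ∈ Ioo 0 R₀, ∀ t : UnitAddCircle, c + r * t.toCircle ∈ Metric.closedBall c R₀ :=
    fun r hr => add_mul_toCircle_mem_closedBall c ⟨hr.1.le, hr.2.le⟩
  have hcompact := isCompact_closedBall c R₀
  obtain ⟨M₁, hM₁⟩ := hcompact.exists_bound_of_continuousOn (hu.contDiffOn.continuousOn.mono hball)
  obtain ⟨M₂, hM₂⟩ := hcompact.exists_bound_of_continuousOn
    ((hu.continuousOn_fderiv hV).mono hball)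
  have hd : ∀ n : ℤ, ∃ d : ℂ, ‖d‖ ≤ 2 * max M₁ M₂ / (R₀ / 2) ^ n.natAbs ∧
      ∀ r ∈ Ioo 0 R₀, angularMode c u n r = d * besselRegular κ n.natAbs r := fun n => by
    have hBessel := hu.isBesselSolution_angularMode hV isOpen_Ioo (fun r hr => hr.1.ne')
      (fun r hr t => hball (hmem r hr t)) n
    rw [show (n : ℝ) ^ 2 = (n.natAbs : ℝ) ^ 2 by simp] at hBessel
    refine hBessel.exists_eq_mul_besselRegular (fun r hr => ?_) (fun r hr => ?_) hR₀ hκR₀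
    · exact norm_fourierCoeff_le (fun t => (hM₁ _ (hmem r hr t)).trans (le_max_left _ _)) n
    · refine norm_fourierCoeff_le (fun t => ?_) n
      refine ((fderiv ℝ u (c + r * t.toCircle)).le_opNorm _).trans ?_
      rw [Circle.norm_coe, mul_one]
      exact (hM₂ _ (hmem r hr t)).trans (le_max_right _ _)
  choose d hdC hdeq using hd
  exact ⟨2 * max M₁ M₂, d, hdC, hdeq⟩

theorem exists_hasSum_besselRegular (hu : HelmholtzOn κ V u) (hV : IsOpen V) (hc : c ∈ V) :
    ∃ R C : ℝ, 0 < R ∧ ∃ d : ℤ → ℂ, (∀ n, ‖d n‖ ≤ C / R ^ n.natAbs) ∧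
      ∀ r ∈ Ioo 0 R, ∀ t : UnitAddCircle,
        HasSum (fun n => d n * besselRegular κ n.natAbs r * fourier n t)
          (u (c + r * t.toCircle)) := by
  obtain ⟨R₁, hR₁, hball⟩ := Metric.nhds_basis_closedBall.mem_iff.1 (hV.mem_nhds hc)
  set R₀ := min R₁ (|κ| + 1)⁻¹
  have hR₀ : 0 < R₀ := lt_min hR₁ (by positivity)
  have hκR₀ : |κ| * R₀ ≤ 1 :=
    calc |κ| * R₀ ≤ (|κ| + 1) * (|κ| + 1)⁻¹ := by
          gcongr
          · exact le_add_of_nonneg_right zero_le_one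
          · exact min_le_right _ _
      _ = 1 := mul_inv_cancel₀ (by positivity)
  obtain ⟨C, d, hdC, hd⟩ := hu.exists_angularMode_eq_mul_besselRegular hV hR₀ hκR₀
    ((Metric.closedBall_subset_closedBall (min_le_left _ _)).trans hball)
  refine ⟨R₀ / 2, C, half_pos hR₀, d, hdC, fun r hr t => ?_⟩
  have hr' : r ∈ Ioo 0 R₀ := ⟨hr.1, hr.2.trans (half_lt_self hR₀)⟩
  have hcont : Continuous fun t : UnitAddCircle => u (c + r * t.toCircle) :=
    (hu.contDiffOn.continuousOn.mono hball).comp_continuous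
      ((continuous_add_mul_toCircle c).comp (Continuous.prodMk_right r)) fun t =>
        add_mul_toCircle_mem_closedBall c ⟨hr.1.le, hr'.2.le.trans (min_le_left _ _)⟩ t
  have hsum : Summable fun n => angularMode c u n r := by
    simp only [fun n => hd n r hr']
    exact summable_mul_besselRegular hdC hr
      ((mul_le_mul_of_nonneg_left hr'.2.le (abs_nonneg κ)).trans hκR₀)
  simp only [← hd _ r hr', ← smul_eq_mul]
  exact has_pointwise_sum_fourier_series_of_summable (f := ⟨_, hcont⟩) hsum t

end HelmholtzOn

lemma analyticAt_besselSeries (m : ℕ) (x : ℂ) : AnalyticAt ℂ (besselSeries m) x :=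
  Differentiable.analyticAt (fun y => (hasDerivAt_besselSeries m y).differentiableAt) x

lemma analyticAt_tsum_mul_pow_mul_besselSeries {d : ℕ → ℂ} {C R : ℝ} (hR : 0 < R)
    (hd : ∀ n, ‖d n‖ ≤ C / R ^ n) :
    AnalyticAt ℂ (fun y : ℂ × ℂ => ∑' n, d n * y.1 ^ n * besselSeries n y.2) 0 := by
  have hC : 0 ≤ C := (norm_nonneg _).trans (by simpa using hd 0)
  have hc : ∀ n k, ‖d n * besselCoeff n k‖ ≤ C * (R⁻¹ + 1) ^ (n + k) := fun n k => by
    have hbessel : ‖besselCoeff n k‖ ≤ (R⁻¹ + 1) ^ k :=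
      (norm_besselCoeff_le n k).trans <| (inv_le_one_of_one_le₀ (mod_cast k.factorial_pos)).trans <|
        one_le_pow₀ (by simpa using hR.le)
    rw [norm_mul, pow_add, ← mul_assoc]
    gcongr
    refine (hd n).trans ?_
    rw [div_eq_mul_inv, ← inv_pow]
    gcongr
    exact le_add_of_nonneg_right zero_le_one
  refine (analyticAt_tsum_tsum_mul_pow_mul_pow (by positivity) hc).congr (.of_forall fun y => ?_)
  refine tsum_congr fun n => ?_
  rw [besselSeries, ← tsum_mul_left]
  exact tsum_congr fun k => by ring

lemma tsum_int_eq_tsum_natCast_add_tsum_neg_sub {f : ℤ → ℂ} (hf : Summable f) :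
    ∑' n, f n = (∑' n : ℕ, f n) + (∑' n : ℕ, f (-n)) - f 0 :=
  Summable.tsum_of_nat_of_neg (hf.comp_injective Nat.cast_injective)
    (hf.comp_injective (neg_injective.comp Nat.cast_injective))

lemma exists_eq_mul_toCircle (z : ℂ) : ∃ t : UnitAddCircle, z = ‖z‖ * t.toCircle := by
  obtain ⟨t, ht⟩ := (AddCircle.homeomorphCircle one_ne_zero).surjective (Circle.exp z.arg)
  rw [AddCircle.homeomorphCircle_apply] at ht
  exact ⟨t, by rw [ht, Circle.coe_exp, Complex.norm_mul_exp_arg_mul_I]⟩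

lemma besselRegular_mul_fourier_natCast (κ r : ℝ) (n : ℕ) (t : UnitAddCircle) :
    besselRegular κ n r * fourier n t =
      (r * t.toCircle) ^ n * besselSeries n ((κ * r / 2) ^ 2) := by
  rw [fourier_apply, natCast_zsmul, AddCircle.toCircle_nsmul, Circle.coe_pow, besselRegular,
    mul_pow]
  ring

lemma besselRegular_mul_fourier_neg_natCast (κ r : ℝ) (n : ℕ) (t : UnitAddCircle) :
    besselRegular κ n r * fourier (-n) t =
      (starRingEnd ℂ (r * t.toCircle)) ^ n * besselSeries n ((κ * r / 2) ^ 2) := by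
  rw [fourier_neg, fourier_apply, natCast_zsmul, AddCircle.toCircle_nsmul, Circle.coe_pow,
    besselRegular, map_pow, map_mul, Complex.conj_ofReal, mul_pow]
  ring

namespace HelmholtzOn

theorem exists_eq_tsum_besselSeries (hu : HelmholtzOn κ V u) (hV : IsOpen V) (hc : c ∈ V) :
    ∃ R C : ℝ, 0 < R ∧ ∃ d : ℤ → ℂ, (∀ n, ‖d n‖ ≤ C / R ^ n.natAbs) ∧ ∀ᶠ z in 𝓝[≠] c,
      u z = (∑' n : ℕ, d n * (z - c) ^ n *
          besselSeries n ((κ / 2) ^ 2 * ((z - c) * starRingEnd ℂ (z - c)))) +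
        (∑' n : ℕ, d (-n) * starRingEnd ℂ (z - c) ^ n *
          besselSeries n ((κ / 2) ^ 2 * ((z - c) * starRingEnd ℂ (z - c)))) -
        d 0 * besselSeries 0 ((κ / 2) ^ 2 * ((z - c) * starRingEnd ℂ (z - c))) := by
  obtain ⟨R, C, hR, d, hd, hsum⟩ := hu.exists_hasSum_besselRegular hV hc
  refine ⟨R, C, hR, d, hd, ?_⟩
  filter_upwards [nhdsWithin_le_nhds (Metric.ball_mem_nhds c hR), self_mem_nhdsWithin] with z hz hzc
  obtain ⟨t, ht⟩ := exists_eq_mul_toCircle (z - c)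
  have hr : ‖z - c‖ ∈ Ioo 0 R := ⟨norm_pos_iff.2 (sub_ne_zero.2 hzc), mem_ball_iff_norm.1 hz⟩
  have hw : (κ / 2 : ℂ) ^ 2 * ((z - c) * starRingEnd ℂ (z - c)) = (κ * ‖z - c‖ / 2) ^ 2 := by
    rw [Complex.mul_conj']
    ring
  have hs := hsum _ hr t
  rw [← ht, add_sub_cancel] at hs
  have hpos : ∀ n : ℕ, d n * besselRegular κ (n : ℤ).natAbs ‖z - c‖ * fourier n t =
      d n * (z - c) ^ n * besselSeries n ((κ * ‖z - c‖ / 2) ^ 2) := fun n => by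
    rw [Int.natAbs_natCast, mul_assoc, besselRegular_mul_fourier_natCast, ← ht, mul_assoc]
  have hneg : ∀ n : ℕ, d (-n) * besselRegular κ (-n : ℤ).natAbs ‖z - c‖ * fourier (-n) t =
      d (-n) * starRingEnd ℂ (z - c) ^ n * besselSeries n ((κ * ‖z - c‖ / 2) ^ 2) := fun n => by
    rw [Int.natAbs_neg, Int.natAbs_natCast, mul_assoc, besselRegular_mul_fourier_neg_natCast, ← ht,
      mul_assoc]
  rw [hw, ← hs.tsum_eq, tsum_int_eq_tsum_natCast_add_tsum_neg_sub hs.summable, tsum_congr hpos,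
    tsum_congr hneg]
  congr 1
  simpa using hpos 0

theorem analyticAt (hu : HelmholtzOn κ V u) (hV : IsOpen V) (hc : c ∈ V) : AnalyticAt ℝ u c := by
  obtain ⟨R, C, hR, d, hd, hsum⟩ := hu.exists_eq_tsum_besselSeries hV hc
  have hz : AnalyticAt ℝ (fun z : ℂ => z - c) c := analyticAt_id.sub analyticAt_const
  have hzc : AnalyticAt ℝ (fun z : ℂ => starRingEnd ℂ (z - c)) c :=
    (Complex.conjCLE.toContinuousLinearMap.analyticAt _).comp hz
  have hw : AnalyticAt ℝ
      (fun z : ℂ => (κ / 2 : ℂ) ^ 2 * ((z - c) * starRingEnd ℂ (z - c))) c :=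
    analyticAt_const.mul (hz.mul hzc)
  have hcomp : ∀ {S : ℂ × ℂ → ℂ} {g : ℂ → ℂ}, AnalyticAt ℂ S 0 → AnalyticAt ℝ g c → g c = 0 →
      AnalyticAt ℝ (fun z => S (g z, (κ / 2 : ℂ) ^ 2 * ((z - c) * starRingEnd ℂ (z - c)))) c :=
    fun {S g} hS hg hgc => by
      refine AnalyticAt.comp (g := S) ?_ (hg.prod hw)
      simpa [hgc, ← Prod.zero_eq_mk] using hS.restrictScalars (𝕜 := ℝ)
  have hpos := hcomp (analyticAt_tsum_mul_pow_mul_besselSeries hR fun n : ℕ => hd n) hz (sub_self c)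
  have hneg := hcomp (analyticAt_tsum_mul_pow_mul_besselSeries hR fun n : ℕ => by
    simpa using hd (-n)) hzc (by simp)
  have hcenter : AnalyticAt ℝ (fun z => d 0 *
      besselSeries 0 ((κ / 2 : ℂ) ^ 2 * ((z - c) * starRingEnd ℂ (z - c)))) c :=
    analyticAt_const.mul ((analyticAt_besselSeries 0 _).restrictScalars.comp hw)
  have han := (hpos.add hneg).sub hcenter
  exact han.congr ((han.continuousAt.eventuallyEq_nhds_iff_eventuallyEq_nhdsNE
    (hu.contDiffOn.continuousOn.continuousAt (hV.mem_nhds hc))).1 (hsum.mono fun z hz => hz.symm))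

end HelmholtzOn

end FourierBessel

section Analyticity

variable {E : Type*} [NormedAddCommGroup E] [InnerProductSpace ℝ E] [FiniteDimensional ℝ E]
  {κ : ℝ} {V : Set E} {u : E → ℂ}

lemma nonempty_linearIsometryEquiv_complex (hE : Module.finrank ℝ E = 2) : Nonempty (ℂ ≃ₗᵢ[ℝ] E) :=
  ⟨Complex.isometryOfOrthonormal ((stdOrthonormalBasis ℝ E).reindex (finCongr hE))⟩

namespace HelmholtzOn

theorem analyticOnNhd_of_finrank_eq_two (hu : HelmholtzOn κ V u) (hV : IsOpen V)
    (hE : Module.finrank ℝ E = 2) : AnalyticOnNhd ℝ u V := fun x hx => by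
  obtain ⟨e⟩ := nonempty_linearIsometryEquiv_complex hE
  have hV' : IsOpen (e ⁻¹' V) := hV.preimage e.continuous
  have hx' : e.symm x ∈ e ⁻¹' V := by simpa using hx
  have han := ((hu.comp_linearIsometryEquiv e).analyticAt hV' hx').comp
    (e.symm.toContinuousLinearEquiv.toContinuousLinearMap.analyticAt x)
  refine han.congr (.of_forall fun y => ?_)
  simp

lemma im_fderiv_eq_zero (hu : HelmholtzOn κ V u) (hV : IsOpen V) (him : ∀ x ∈ V, (u x).im = 0)
    {x : E} (hx : x ∈ V) (w : E) : (fderiv ℝ u x w).im = 0 := by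
  have hfderiv : HasFDerivAt (fun y => (u y).im) (Complex.imCLM ∘L fderiv ℝ u x) x :=
    Complex.imCLM.hasFDerivAt.comp x (hu.hasFDerivAt hV hx)
  have hzero : (fun y => (u y).im) =ᶠ[𝓝 x] fun _ => 0 := eventually_of_mem (hV.mem_nhds hx) him
  exact DFunLike.congr_fun
    (hfderiv.unique ((hasFDerivAt_const (0 : ℝ) x).congr_of_eventuallyEq hzero)) w

end HelmholtzOn

end Analyticity

section Rellich

open Bornology

lemma tendsto_fourierCoeff_circle {g : ℂ → ℂ} (hg : Tendsto g (cobounded ℂ) (𝓝 0)) (n : ℤ) :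
    Tendsto (fun r : ℝ => fourierCoeff (fun t : UnitAddCircle => g (0 + r * t.toCircle)) n) atTop
      (𝓝 0) := by
  refine tendsto_fourierCoeff_of_tendstoUniformly (Metric.tendstoUniformly_iff.2 fun ε hε => ?_) n
  obtain ⟨R, -, hR⟩ := hasBasis_cobounded_norm.eventually_iff.1
    (hg.eventually (Metric.ball_mem_nhds 0 hε))
  filter_upwards [eventually_ge_atTop R, eventually_ge_atTop 0] with r hr hr₀ t
  rw [Pi.zero_apply, dist_comm]
  exact hR (by rwa [mem_ofPred_eq, zero_add, norm_ofReal_mul_toCircle hr₀])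

variable {κ a : ℝ}

namespace HelmholtzOn

lemma angularMode_eq_zero_of_tendsto {V : Set ℂ} {u : ℂ → ℂ} (hu : HelmholtzOn κ V u)
    (hV : IsOpen V) (hκ : κ ≠ 0) (ha : 0 ≤ a) (haV : ∀ z, a < ‖z‖ → z ∈ V)
    (hu₀ : Tendsto (fun z => √‖z‖ • u z) (cobounded ℂ) (𝓝 0))
    (hu₁ : Tendsto (fun z => √‖z‖ • fderiv ℝ u z (‖z‖⁻¹ • z)) (cobounded ℂ) (𝓝 0)) (n : ℤ) {r : ℝ}
    (hr : a < r) : angularMode 0 u n r = 0 := by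
  have hnorm : ∀ {r : ℝ}, 0 < r → ∀ t : UnitAddCircle, ‖(0 + r * t.toCircle : ℂ)‖ = r :=
    fun hr t => by rw [zero_add, norm_ofReal_mul_toCircle hr.le]
  have hdir : ∀ {r : ℝ}, 0 < r → ∀ t : UnitAddCircle,
      r⁻¹ • (0 + r * t.toCircle : ℂ) = t.toCircle := fun hr t => by
    rw [zero_add, ← Complex.real_smul, inv_smul_smul₀ hr.ne']
  have hBessel := hu.isBesselSolution_angularMode (c := 0) hV isOpen_Ioi
    (fun r hr => (ha.trans_lt hr).ne') (fun r hr t => haV _ (by rwa [hnorm (ha.trans_lt hr)])) n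
  refine hBessel.eq_zero_of_tendsto_zero hκ ha
    ((tendsto_fourierCoeff_circle hu₀ n).congr' ?_) ((tendsto_fourierCoeff_circle hu₁ n).congr' ?_)
    hr
  all_goals
    filter_upwards [eventually_gt_atTop 0] with r hr
    simp only [hnorm hr, hdir hr, Complex.real_smul]
    exact fourierCoeff.const_mul _ _ n

theorem eq_zero_of_tendsto_zero_complex {V : Set ℂ} {u : ℂ → ℂ} (hu : HelmholtzOn κ V u)
    (hV : IsOpen V) (hκ : κ ≠ 0) (ha : 0 ≤ a) (haV : ∀ z, a < ‖z‖ → z ∈ V)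
    (hu₀ : Tendsto (fun z => √‖z‖ • u z) (cobounded ℂ) (𝓝 0))
    (hu₁ : Tendsto (fun z => √‖z‖ • fderiv ℝ u z (‖z‖⁻¹ • z)) (cobounded ℂ) (𝓝 0)) {z : ℂ}
    (hz : a < ‖z‖) : u z = 0 := by
  have hmode : ∀ n, angularMode 0 u n ‖z‖ = 0 := fun n =>
    hu.angularMode_eq_zero_of_tendsto hV hκ ha haV hu₀ hu₁ n hz
  have hcont : Continuous fun t : UnitAddCircle => u (0 + ‖z‖ * t.toCircle) :=
    hu.contDiffOn.continuousOn.comp_continuous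
      ((continuous_add_mul_toCircle 0).comp (Continuous.prodMk_right ‖z‖)) fun t =>
        haV _ (by rwa [zero_add, norm_ofReal_mul_toCircle (norm_nonneg z)])
  have hcoeff : fourierCoeff (⟨_, hcont⟩ : C(UnitAddCircle, ℂ)) = 0 := funext hmode
  have hsummable : Summable (fourierCoeff (⟨_, hcont⟩ : C(UnitAddCircle, ℂ))) :=
    hcoeff ▸ summable_zero
  obtain ⟨t, ht⟩ := exists_eq_mul_toCircle z
  have hsum := has_pointwise_sum_fourier_series_of_summable hsummable t
  simp only [hcoeff, Pi.zero_apply, zero_smul] at hsum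
  rw [ht, ← zero_add (_ * _ : ℂ)]
  exact hsum.unique hasSum_zero

variable {E : Type*} [NormedAddCommGroup E] [InnerProductSpace ℝ E] [FiniteDimensional ℝ E]
  {V : Set E} {u : E → ℂ}

/-- **Rellich's lemma** in the plane. -/
theorem eventually_eq_zero_of_tendsto_zero (hu : HelmholtzOn κ V u) (hV : IsOpen V)
    (hE : Module.finrank ℝ E = 2) (hκ : κ ≠ 0) (hVb : IsBounded Vᶜ)
    (hu₀ : Tendsto (fun x => √‖x‖ • u x) (cobounded E) (𝓝 0))
    (hu₁ : Tendsto (fun x => √‖x‖ • fderiv ℝ u x (‖x‖⁻¹ • x)) (cobounded E) (𝓝 0)) :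
    ∀ᶠ x in cobounded E, u x = 0 := by
  obtain ⟨e⟩ := nonempty_linearIsometryEquiv_complex hE
  obtain ⟨a, ha, haV⟩ := hVb.subset_closedBall_lt 0 0
  have haV' : ∀ x, a < ‖x‖ → x ∈ V := fun x hx => by
    by_contra hxV
    exact hx.not_ge (mem_closedBall_zero_iff.1 (haV hxV))
  have he : Tendsto e (cobounded ℂ) (cobounded E) := by
    simpa [← tendsto_norm_atTop_iff_cobounded] using tendsto_norm_cobounded_atTop
  have hfderiv : ∀ z, fderiv ℝ (u ∘ e) z (‖z‖⁻¹ • z) = fderiv ℝ u (e z) (‖e z‖⁻¹ • e z) :=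
    fun z => by
      refine (DFunLike.congr_fun (e.toContinuousLinearEquiv.comp_right_fderiv (f := u)) _).trans ?_
      rw [e.norm_map, ← e.map_smul]
      rfl
  have hzero : ∀ z, a < ‖z‖ → (u ∘ e) z = 0 := fun z hz =>
    (hu.comp_linearIsometryEquiv e).eq_zero_of_tendsto_zero_complex (hV.preimage e.continuous) hκ
      ha.le (fun z hz => haV' _ (by simpa using hz))
      (by simpa [Function.comp_def] using hu₀.comp he)
      ((hu₁.comp he).congr fun z => by rw [hfderiv, Function.comp_apply, e.norm_map]) hz
  filter_upwards [tendsto_norm_cobounded_atTop.eventually_gt_atTop a] with x hx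
  simpa using hzero (e.symm x) (by simpa using hx)

end HelmholtzOn

lemma tendsto_zero_of_im_eq_zero {ι : Type*} {l : Filter ι} {s : ι → ℝ} {f g : ι → ℂ} (hκ : κ ≠ 0)
    (hf : ∀ᶠ i in l, (f i).im = 0) (hg : ∀ᶠ i in l, (g i).im = 0)
    (h : Tendsto (fun i => s i * (g i - Complex.I * κ * f i)) l (𝓝 0)) :
    Tendsto (fun i => s i • f i) l (𝓝 0) ∧ Tendsto (fun i => s i • g i) l (𝓝 0) := by
  have hre := (Complex.continuous_ofReal.comp Complex.continuous_re).tendsto' 0 0 (by simp)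
    |>.comp h
  have him := (Complex.continuous_ofReal.comp Complex.continuous_im).tendsto' 0 0 (by simp)
    |>.comp h
  constructor
  · rw [← mul_zero (-κ⁻¹ : ℂ)]
    refine (him.const_mul _).congr' ?_
    filter_upwards [hf, hg] with i hfi hgi
    exact Complex.ext (by simp [hgi, field]) (by simp [hfi])
  · refine hre.congr' ?_
    filter_upwards [hf, hg] with i hfi hgi
    exact Complex.ext (by simp [hfi]) (by simp [hgi])

end Rellich

section AnalyticCurve

variable {E F : Type*} [NormedAddCommGroup E] [NormedSpace ℝ E] [NormedAddCommGroup F]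
  [NormedSpace ℝ F]

theorem eqOn_zero_range_of_infinite {γ : ℝ → E} {T : ℝ} (hT : 0 < T) (hγ : AnalyticOnNhd ℝ γ univ)
    (hper : Function.Periodic γ T) {f : E → F} (hf : AnalyticOnNhd ℝ f (range γ)) {Λ : Set E}
    (hΛ : Λ.Infinite) (hΛγ : Λ ⊆ range γ) (hfΛ : EqOn f 0 Λ) : EqOn f 0 (range γ) := by
  have hcomp : AnalyticOnNhd ℝ (f ∘ γ) univ := hf.comp hγ fun t _ => mem_range_self t
  have hpre : (γ ⁻¹' Λ ∩ Icc 0 (0 + T)).Infinite := by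
    refine .of_image γ ?_
    rwa [image_preimage_inter, hper.image_Icc hT, inter_eq_left.2 hΛγ]
  obtain ⟨t, -, ht⟩ := hpre.exists_accPt_of_subset_isCompact isCompact_Icc inter_subset_right
  have hfreq : ∃ᶠ s in 𝓝[≠] t, (f ∘ γ) s = 0 :=
    (accPt_iff_frequently_nhdsNE.1 ht).mono fun s hs => hfΛ hs.1
  rintro _ ⟨s, rfl⟩
  exact hcomp.eqOn_zero_of_preconnected_of_frequently_eq_zero isPreconnected_univ (mem_univ t) hfreq
    (mem_univ s)

lemma infinite_inter_of_isPreconnected {X : Type*} [TopologicalSpace X] [T1Space X] {S V : Set X}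
    (hS : IsPreconnected S) (hSnt : S.Nontrivial) (hV : IsOpen V) (hVS : (V ∩ S).Nonempty) :
    (V ∩ S).Infinite := by
  obtain ⟨x, hxV, hxS⟩ := hVS
  have := hSnt.coe_sort
  have : ConnectedSpace S := isConnected_iff_connectedSpace.1 ⟨⟨x, hxS⟩, hS⟩
  have hinf : (((↑) : S → X) ⁻¹' V).Infinite :=
    infinite_of_mem_nhds (⟨x, hxS⟩ : S) ((hV.preimage continuous_subtype_val).mem_nhds hxV)
  rw [inter_comm, ← Subtype.image_preimage_coe]
  exact hinf.image Subtype.val_injective.injOn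

namespace IsRealAnalyticClosedCurve

lemma nontrivial {Γ : Set R2} (hΓ : IsRealAnalyticClosedCurve Γ) : Γ.Nontrivial := by
  obtain ⟨γ, -, -, -, hinj, rfl⟩ := hΓ
  refine ⟨γ 0, mem_range_self 0, γ π, mem_range_self π, fun h => pi_pos.ne ?_⟩
  exact hinj ⟨le_rfl, two_pi_pos⟩ ⟨pi_pos.le, by linarith [pi_pos]⟩ h

end IsRealAnalyticClosedCurve

end AnalyticCurve

section RadiationSolution

open Bornology

variable {κ : ℝ} {U D Λ : Set R2} {ψ ψ₁ ψ₂ : R2 → ℂ}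

lemma isRadiationSolution_iff (hU : IsOpen U) : IsRadiationSolution κ U ψ ↔ HelmholtzOn κ U ψ ∧
    Tendsto (fun x => (√‖x‖ : ℂ) * (fderiv ℝ ψ x (‖x‖⁻¹ • x) - Complex.I * κ * ψ x))
      (cobounded R2 ⊓ 𝓟 U) (𝓝 0) := by
  rw [helmholtzOn_iff_laplacian2 hU, and_assoc, IsRadiationSolution,
    (hasBasis_cobounded_norm.inf_principal U).tendsto_iff Metric.nhds_basis_ball]
  simp only [true_and, mem_ball_zero_iff]
  refine and_congr_right' (and_congr_right' (forall₂_congr fun ε _ => ⟨?_, ?_⟩))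
  · rintro ⟨R, -, hR⟩
    exact ⟨R, fun x hx => hR x hx.2 hx.1⟩
  · rintro ⟨R, hR⟩
    exact ⟨max R 1, lt_max_of_lt_right one_pos,
      fun x hx hxR => hR x ⟨(le_max_left _ _).trans hxR, hx⟩⟩

namespace IsRadiationSolution

lemma sub (hU : IsOpen U) (h₁ : IsRadiationSolution κ U ψ₁) (h₂ : IsRadiationSolution κ U ψ₂) :
    IsRadiationSolution κ U (ψ₁ - ψ₂) := by
  rw [isRadiationSolution_iff hU] at h₁ h₂ ⊢
  refine ⟨h₁.1.sub hU h₂.1, ?_⟩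
  rw [← sub_zero (0 : ℂ)]
  refine (h₁.2.sub h₂.2).congr' ?_
  filter_upwards [mem_inf_of_right (mem_principal_self U)] with x hx
  rw [((h₁.1.hasFDerivAt hU hx).sub (h₂.1.hasFDerivAt hU hx)).fderiv, sub_apply, Pi.sub_apply]
  ring

theorem eqOn_zero_of_im_eq_zero (hψ : IsRadiationSolution κ U ψ) (hκ : κ ≠ 0) (hU : IsOpen U)
    (hUc : IsPreconnected U) (hUb : IsBounded Uᶜ) (him : ∀ x ∈ U, (ψ x).im = 0) : EqOn ψ 0 U := by
  obtain ⟨hH, hrad⟩ := (isRadiationSolution_iff hU).1 hψ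
  have hUmem : U ∈ cobounded R2 := isBounded_compl_iff.1 hUb
  rw [inf_eq_left.2 (le_principal_iff.2 hUmem)] at hrad
  obtain ⟨hψ₀, hψ₁⟩ := tendsto_zero_of_im_eq_zero hκ (eventually_of_mem hUmem him)
    (eventually_of_mem hUmem fun x hx => hH.im_fderiv_eq_zero hU him hx _) hrad
  have hfar := hH.eventually_eq_zero_of_tendsto_zero hU (by simp) hκ hUb hψ₀ hψ₁
  obtain ⟨R, -, hR⟩ := hasBasis_cobounded_norm.eventually_iff.1 (hfar.and hUmem)
  obtain ⟨x, hx⟩ := NormedSpace.exists_lt_norm ℝ R2 R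
  have han : AnalyticOnNhd ℝ ψ U := hH.analyticOnNhd_of_finrank_eq_two hU (by simp)
  refine han.eqOn_zero_of_preconnected_of_eventuallyEq_zero hUc (hR hx.le).2 ?_
  filter_upwards [continuous_norm.continuousAt.eventually_const_lt hx] with y hy
  exact (hR hy.le).1

theorem im_eq_zero_of_im_eq_zero_on_curve (hψ : IsRadiationSolution κ U ψ) (hU : IsOpen U)
    (hUc : IsPreconnected U) (hD : IsOpen D) (hDne : D.Nonempty) {γ : ℝ → R2} {T : ℝ} (hT : 0 < T)
    (hγ : AnalyticOnNhd ℝ γ univ) (hper : Function.Periodic γ T) (hDγ : frontier D = range γ)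
    (hDU : closure D ⊆ U) (hκD : NotDirichletEigenvalue κ D) (hΛ : Λ.Infinite)
    (hΛD : Λ ⊆ frontier D) (him : ∀ x ∈ Λ, (ψ x).im = 0) : ∀ x ∈ U, (ψ x).im = 0 := by
  have hv : HelmholtzOn κ U ((Complex.ofRealCLM.comp Complex.imCLM) ∘ ψ) :=
    ((isRadiationSolution_iff hU).1 hψ).1.clm_comp hU _
  have hvan := hv.analyticOnNhd_of_finrank_eq_two hU (by simp)
  have hDU' : D ⊆ U := subset_closure.trans hDU
  have hfrontier := eqOn_zero_range_of_infinite hT hγ hper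
    (hvan.mono (hDγ ▸ frontier_subset_closure.trans hDU)) hΛ (hDγ ▸ hΛD) fun x hx => by
      simp [him x hx]
  have hvD := hκD _ (hv.contDiffOn.continuousOn.mono hDU) (hv.contDiffOn.mono hDU')
    ((helmholtzOn_iff_laplacian2 hD).1 (hv.mono hDU')).2 (hDγ ▸ hfrontier)
  obtain ⟨y, hy⟩ := hDne
  have hvU := hvan.eqOn_zero_of_preconnected_of_eventuallyEq_zero hUc (hDU' hy)
    (eventually_of_mem (hD.mem_nhds hy) hvD)
  exact fun x hx => Complex.ofReal_eq_zero.1 (hvU hx)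

end IsRadiationSolution

end RadiationSolution

theorem im_on_analytic_curve_determines_radiation_solution_general {κ : ℝ} (hκ : κ ≠ 0)
    {U D Λ : Set R2} (hU : IsOpen U) (hUc : IsPreconnected U) (hUb : Bornology.IsBounded Uᶜ)
    (hD : IsOpen D) (hDne : D.Nonempty) {γ : ℝ → R2} {T : ℝ} (hT : 0 < T)
    (hγ : AnalyticOnNhd ℝ γ univ) (hper : Function.Periodic γ T) (hDγ : frontier D = range γ)
    (hDU : closure D ⊆ U) (hκD : NotDirichletEigenvalue κ D) (hΛ : Λ.Infinite)
    (hΛD : Λ ⊆ frontier D) {ψ₁ ψ₂ : R2 → ℂ} (h₁ : IsRadiationSolution κ U ψ₁)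
    (h₂ : IsRadiationSolution κ U ψ₂) (him : ∀ x ∈ Λ, (ψ₁ x).im = (ψ₂ x).im) : EqOn ψ₁ ψ₂ U := by
  have hψ : IsRadiationSolution κ U (ψ₁ - ψ₂) := h₁.sub hU h₂
  have hreal : ∀ x ∈ U, ((ψ₁ - ψ₂) x).im = 0 :=
    hψ.im_eq_zero_of_im_eq_zero_on_curve hU hUc hD hDne hT hγ hper hDγ hDU hκD hΛ hΛD
      fun x hx => by simp [him x hx]
  exact fun x hx => sub_eq_zero.1 (hψ.eqOn_zero_of_im_eq_zero hκ hU hUc hUb hreal hx)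

theorem im_on_analytic_curve_determines_radiation_solution
    (κ : ℝ) (hκ : 0 < κ)
    (U : Set R2) (hUopen : IsOpen U) (hUconn : IsConnected U) (hKcpt : IsCompact Uᶜ)
    (D : Set R2) (hDopen : IsOpen D) (hDbdd : Bornology.IsBounded D) (hDconn : IsConnected D)
    (Γ : Set R2) (hΓ : Γ = frontier D)
    (hΓconn : IsConnected Γ) (hΓan : IsRealAnalyticClosedCurve Γ)
    (hDU : closure D ⊆ U)
    (hκD : NotDirichletEigenvalue κ D)
    (Λ : Set R2) (hΛne : Λ.Nonempty) (hΛΓ : Λ ⊆ Γ)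
    (hΛopen : ∃ V : Set R2, IsOpen V ∧ Λ = V ∩ Γ)
    (ψ₁ ψ₂ : R2 → ℂ)
    (h₁ : IsRadiationSolution κ U ψ₁) (h₂ : IsRadiationSolution κ U ψ₂)
    (him : ∀ x ∈ Λ, (ψ₁ x).im = (ψ₂ x).im) :
    ∀ x ∈ U, ψ₁ x = ψ₂ x := by
  obtain ⟨V, hV, rfl⟩ := hΛopen
  have hΛ := infinite_inter_of_isPreconnected hΓconn.isPreconnected hΓan.nontrivial hV hΛne
  obtain ⟨γ, hγ, hper, -, -, hΓγ⟩ := hΓan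
  exact im_on_analytic_curve_determines_radiation_solution_general hκ.ne' hUopen
    hUconn.isPreconnected hKcpt.isBounded hDopen hDconn.nonempty two_pi_pos (fun t _ => hγ t) hper
    (hΓ.symm.trans hΓγ) hDU hκD hΛ (hΓ ▸ hΛΓ) h₁ h₂ him
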